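/- arXiv:math/0607471 — 2 statements merged into one kernel-verified Lean document; each statement's English description precedes it below -/
import Mathlib

section
/- Let ν ∈ ℝ be not an integer. Then the set { z ∈ ℂ : z ∉ (−∞, 0] and K_ν(z) = 0 } is finite; that is, for real order the Macdonald function has only finitely many zeros in the principal Riemann sheet. -/
open Complex Asymptotics

/-- The entire series `∑ (z²/4)^k / (k! (a)_k)` appearing in the ascending expansion
of the Macdonald function (with `a = 1 ∓ ν`). -/
noncomputable def macdonaldS (a z : ℂ) : ℂ :=
  ∑' k : ℕ, (z ^ 2 / 4) ^ k / ((k.factorial : ℂ) * (ascPochhammer ℂ k).eval a)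

/-- The Macdonald function `K_ν(z)` defined by its ascending series, for `ν` not an
integer and `z` off the cut `(-∞, 0]`, with principal complex powers. -/
noncomputable def macdonaldK (ν z : ℂ) : ℂ :=
  ((Real.pi : ℂ) / 2) / Complex.sin (ν * (Real.pi : ℂ)) *
    ((z / 2) ^ (-ν) / Complex.Gamma (1 - ν) * macdonaldS (1 - ν) z -
     (z / 2) ^ ν / Complex.Gamma (1 + ν) * macdonaldS (1 + ν) z)

section hypergeom

/-- generic confluent hypergeometric limit series. -/
noncomputable def hF {𝕜 : Type*} [RCLike 𝕜] (a y : 𝕜) : 𝕜 :=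
  ∑' k : ℕ, y ^ k / ((k.factorial : 𝕜) * (ascPochhammer 𝕜 k).eval a)

variable {𝕜 : Type*} [RCLike 𝕜]

lemma asc_succ_left_eval (a : 𝕜) (k : ℕ) :
    (ascPochhammer 𝕜 (k + 1)).eval a = a * (ascPochhammer 𝕜 k).eval (a + 1) := by
  rw [ascPochhammer_succ_left]
  simp

lemma asc_ne_zero {a : 𝕜} (ha : ∀ n : ℕ, a + n ≠ 0) (k : ℕ) :
    (ascPochhammer 𝕜 k).eval a ≠ 0 := by
  induction k with
  | zero => simp
  | succ k ih =>
    rw [ascPochhammer_succ_eval]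
    exact mul_ne_zero ih (ha k)

lemma hF_summable {a : 𝕜} (ha : ∀ n : ℕ, a + n ≠ 0) (y : 𝕜) :
    Summable fun k : ℕ => y ^ k / ((k.factorial : 𝕜) * (ascPochhammer 𝕜 k).eval a) := by
  by_cases hy : y = 0
  · subst hy
    apply summable_of_ne_finset_zero (s := {0})
    intro b hb
    simp at hb
    simp [hb]
  have hne : ∀ k : ℕ, y ^ k / ((k.factorial : 𝕜) * (ascPochhammer 𝕜 k).eval a) ≠ 0 := by
    intro k
    have := asc_ne_zero ha k
    have h2 : (k.factorial : 𝕜) ≠ 0 := by exact_mod_cast k.factorial_ne_zero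
    positivity
  apply summable_of_ratio_test_tendsto_lt_one (l := 0) one_pos
  · exact Filter.Eventually.of_forall hne
  have key : ∀ k : ℕ, ‖y ^ (k + 1) / (((k + 1).factorial : 𝕜) * (ascPochhammer 𝕜 (k + 1)).eval a)‖ /
      ‖y ^ k / ((k.factorial : 𝕜) * (ascPochhammer 𝕜 k).eval a)‖ =
      ‖y‖ * (‖((k : 𝕜) + 1)‖⁻¹ * ‖a + k‖⁻¹) := by
    intro k
    have h1 := asc_ne_zero ha k
    have h2 : (k.factorial : 𝕜) ≠ 0 := by exact_mod_cast k.factorial_ne_zero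
    have h3 : ((k : 𝕜) + 1) ≠ 0 := by exact_mod_cast k.succ_ne_zero
    have h4 := ha k
    rw [← norm_div, ← norm_inv, ← norm_inv, ← norm_mul, ← norm_mul]
    congr 1
    rw [ascPochhammer_succ_eval, Nat.factorial_succ, pow_succ]
    push_cast
    field_simp
  simp_rw [key]
  have t1 : Filter.Tendsto (fun k : ℕ => ‖((k : 𝕜) + 1)‖⁻¹) Filter.atTop (nhds 0) := by
    have : ∀ k : ℕ, ‖((k : 𝕜) + 1)‖⁻¹ = 1 / ((k : ℝ) + 1) := by
      intro k
      have : ((k : 𝕜) + 1) = ((k + 1 : ℕ) : 𝕜) := by push_cast; ring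
      rw [this, RCLike.norm_natCast]
      push_cast
      simp
    simp_rw [this]
    exact tendsto_one_div_add_atTop_nhds_zero_nat
  have t2 : Filter.Tendsto (fun k : ℕ => ‖a + (k : 𝕜)‖⁻¹) Filter.atTop (nhds 0) := by
    apply Filter.Tendsto.inv_tendsto_atTop
    apply Filter.tendsto_atTop_mono (f := fun k : ℕ => (k : ℝ) - ‖a‖)
    · intro k
      have := norm_sub_norm_le (k : 𝕜) (-a)
      rw [RCLike.norm_natCast, norm_neg, sub_neg_eq_add, add_comm (k : 𝕜)] at this
      exact this
    · exact Filter.tendsto_atTop_add_const_right _ _ tendsto_natCast_atTop_atTop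
  simpa using (t1.mul t2).const_mul ‖y‖

lemma hF_norm_summable {a : 𝕜} (ha : ∀ n : ℕ, a + n ≠ 0) (r : ℝ) :
    Summable fun k : ℕ => r ^ k * ‖((k.factorial : 𝕜) * (ascPochhammer 𝕜 k).eval a)⁻¹‖ := by
  have := (hF_summable ha (r : 𝕜)).norm
  rw [← summable_abs_iff] 
  refine this.congr fun k => ?_
  rw [abs_mul, abs_norm, abs_pow, norm_div, norm_pow, RCLike.norm_ofReal, norm_inv]
  rfl

lemma hF_coef (a : 𝕜) (ha : ∀ n : ℕ, a + n ≠ 0) (k : ℕ) :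
    (((k + 1 : ℕ) : 𝕜)) * (((k + 1).factorial : 𝕜) * (ascPochhammer 𝕜 (k + 1)).eval a)⁻¹ =
      ((k.factorial : 𝕜) * (ascPochhammer 𝕜 k).eval (a + 1))⁻¹ / a := by
  have h2 : (k.factorial : 𝕜) ≠ 0 := by exact_mod_cast k.factorial_ne_zero
  have h3 : ((k : 𝕜) + 1) ≠ 0 := by exact_mod_cast k.succ_ne_zero
  have h4 : a ≠ 0 := by simpa using ha 0
  have h5 : (ascPochhammer 𝕜 k).eval (a + 1) ≠ 0 := by
    apply asc_ne_zero
    intro n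
    have := ha (n + 1)
    push_cast at this
    rwa [add_assoc, add_comm (1 : 𝕜)]
  rw [asc_succ_left_eval, Nat.factorial_succ]
  push_cast
  field_simp

lemma shift_ok {a : 𝕜} (ha : ∀ n : ℕ, a + n ≠ 0) : ∀ n : ℕ, a + 1 + n ≠ 0 := by
  intro n
  have := ha (n + 1)
  push_cast at this
  rwa [add_assoc, add_comm (1 : 𝕜)]

lemma hF_hasDerivAt {a : 𝕜} (ha : ∀ n : ℕ, a + n ≠ 0) (y : 𝕜) :
    HasDerivAt (fun y => hF a y) (hF (a + 1) y / a) y := by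
  have h4 : a ≠ 0 := by simpa using ha 0
  set R : ℝ := ‖y‖ + 1
  set c : ℕ → 𝕜 := fun k => ((k.factorial : 𝕜) * (ascPochhammer 𝕜 k).eval a)⁻¹ with hc
  set u : ℕ → ℝ := fun k => ‖(k : 𝕜) * c k‖ * R ^ (k - 1) with hu
  have hus : Summable u := by
    rw [← summable_nat_add_iff 1]
    have := (hF_norm_summable (shift_ok ha) R).mul_right (‖a‖⁻¹)
    refine this.congr fun k => ?_
    simp only [hu, hc]
    rw [hF_coef a ha k, norm_div, Nat.add_sub_cancel]
    ring
  have hmain := hasDerivAt_tsum_of_isPreconnected (𝕜 := 𝕜) (u := u)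
    (g := fun k y => y ^ k * c k) (g' := fun k y => ((k : 𝕜) * y ^ (k - 1)) * c k)
    (t := Metric.ball 0 R) (y₀ := y) (y := y) hus Metric.isOpen_ball
    (by
      let _ := RCLike.toInnerProductSpaceReal (𝕜 := 𝕜)
      exact (convex_ball (0 : 𝕜) R).isPreconnected)
    (fun n y _ => (hasDerivAt_pow n y).mul_const _)
    (fun n y hy => by
      rw [mem_ball_zero_iff] at hy
      simp only [hu]
      rw [mul_right_comm, norm_mul, norm_pow]
      gcongr)
    (by simp [R]) (by simpa [hc, div_eq_mul_inv] using hF_summable ha y) (by simp [R])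
  have e1 : (fun z : 𝕜 => ∑' k, z ^ k * c k) = fun y => hF a y := by
    funext z
    simp [hF, hc, div_eq_mul_inv]
  rw [e1] at hmain
  suffices hs : hF (a + 1) y / a = ∑' (n : ℕ), (n : 𝕜) * y ^ (n - 1) * c n by
    rw [hs]; exact hmain
  rw [Summable.tsum_eq_zero_add]
  · simp only [Nat.cast_zero, zero_mul, zero_add, hF]
    rw [← tsum_div_const]
    congr 1
    funext k
    rw [Nat.add_sub_cancel, mul_right_comm, hF_coef a ha k]
    field_simp
  · apply Summable.of_norm_bounded hus
    intro k
    simp only [hu]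
    rw [mul_right_comm, norm_mul, norm_pow]
    gcongr
    simp [R]

/-- contiguous relation -/
lemma hF_contig {a : 𝕜} (ha : ∀ n : ℕ, a + n ≠ 0) (y : 𝕜) :
    hF a y = hF (a + 1) y + y / a * (hF (a + 1 + 1) y / (a + 1)) := by
  have h4 : a ≠ 0 := by simpa using ha 0
  have ha1 := shift_ok ha
  have h5 : a + 1 ≠ 0 := by simpa using ha1 0
  have ha2 := shift_ok ha1
  unfold hF
  rw [(hF_summable ha y).tsum_eq_zero_add, (hF_summable ha1 y).tsum_eq_zero_add,
    ← tsum_div_const, ← tsum_mul_left, add_assoc,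
    ← Summable.tsum_add ((summable_nat_add_iff 1).2 (hF_summable ha1 y))
      (((hF_summable ha2 y).div_const _).mul_left _)]
  simp only [pow_zero, ascPochhammer_zero, Polynomial.eval_one]
  congr 2
  funext k
  have h2 : (k.factorial : 𝕜) ≠ 0 := by exact_mod_cast k.factorial_ne_zero
  have h3 : ((k : 𝕜) + 1) ≠ 0 := by exact_mod_cast k.succ_ne_zero
  have h6 := asc_ne_zero ha2 k
  have h7 := asc_ne_zero ha1 k
  have h8 := ha1 k
  have e : (ascPochhammer 𝕜 k).eval (a + 1) * (a + 1 + k) =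
      (a + 1) * (ascPochhammer 𝕜 k).eval (a + 1 + 1) := by
    rw [← ascPochhammer_succ_eval, asc_succ_left_eval]
  rw [asc_succ_left_eval a, ascPochhammer_succ_eval, Nat.factorial_succ, pow_succ]
  have e2 : (ascPochhammer 𝕜 k).eval (a + 1 + 1) =
    (ascPochhammer 𝕜 k).eval (a + 1) * (a + 1 + k) / (a + 1) := by
    rw [e]; field_simp
  rw [e2]
  push_cast
  field_simp
  ring

lemma hF_zero (a : 𝕜) : hF a (0 : 𝕜) = 1 := by
  unfold hF
  rw [tsum_eq_single 0]
  · simp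
  · intro k hk
    simp [hk]

end hypergeom

lemma asc_ofReal (a : ℝ) (k : ℕ) :
    (((ascPochhammer ℝ k).eval a : ℝ) : ℂ) = (ascPochhammer ℂ k).eval (a : ℂ) := by
  induction k with
  | zero => simp
  | succ k ih =>
    rw [ascPochhammer_succ_eval, ascPochhammer_succ_eval, ← ih]
    push_cast
    ring

lemma hF_ofReal (a y : ℝ) : ((hF a y : ℝ) : ℂ) = hF (a : ℂ) (y : ℂ) := by
  unfold hF
  rw [Complex.ofReal_tsum]
  congr 1
  funext k
  rw [← asc_ofReal]
  push_cast
  rfl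

lemma hF_continuous {a : ℂ} (ha : ∀ n : ℕ, a + n ≠ 0) : Differentiable ℂ (fun y => hF a y) :=
  fun y => (hF_hasDerivAt ha y).differentiableAt


section fint
open MeasureTheory Set Filter Topology

/-- `∫₀^∞ u^{s-1} e^{-u-y/u} du`. -/
noncomputable def fI (s y : ℝ) : ℝ := ∫ u in Ioi (0 : ℝ), u ^ (s - 1) * Real.exp (-u - y / u)

lemma fI_meas (s y : ℝ) : AEStronglyMeasurable (fun u : ℝ => u ^ (s - 1) * Real.exp (-u - y / u))
    (volume.restrict (Ioi 0)) := by
  apply Measurable.aestronglyMeasurable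
  fun_prop

lemma gamma_int {a b : ℝ} (ha : -1 < a) (hb : 0 < b) :
    IntegrableOn (fun u : ℝ => u ^ a * Real.exp (-b * u)) (Ioi 0) := by
  have := integrableOn_rpow_mul_exp_neg_mul_rpow (p := 1) (s := a) (b := b) ha one_pos hb
  simpa using this

lemma fI_integrable (s : ℝ) {y : ℝ} (hy : 0 < y) :
    IntegrableOn (fun u : ℝ => u ^ (s - 1) * Real.exp (-u - y / u)) (Ioi 0) := by
  obtain ⟨n, hn⟩ := exists_nat_gt (-s)
  have hb := (gamma_int (a := s - 1 + n) (b := 1) (by linarith) one_pos).const_mul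
    ((n.factorial : ℝ) / y ^ n)
  refine Integrable.mono' hb (fI_meas s y) ?_
  refine (ae_restrict_iff' measurableSet_Ioi).2 (Eventually.of_forall fun u hu => ?_)
  have hu : 0 < u := hu
  rw [Real.norm_of_nonneg (by positivity)]
  have h1 : Real.exp (-(y / u)) ≤ (n.factorial : ℝ) / (y / u) ^ n := by
    have h := Real.pow_div_factorial_le_exp (y / u) (by positivity) n
    rw [Real.exp_neg, ← inv_div ((y / u) ^ n)]
    apply inv_anti₀ (by positivity) h
  rw [sub_eq_add_neg (-u), Real.exp_add, Real.rpow_add hu, Real.rpow_natCast]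
  calc u ^ (s - 1) * (Real.exp (-u) * Real.exp (-(y / u)))
      ≤ u ^ (s - 1) * (Real.exp (-u) * ((n.factorial : ℝ) / (y / u) ^ n)) := by gcongr
    _ = _ := by
        rw [neg_one_mul, div_pow]
        field_simp

lemma fI_nonneg (s y : ℝ) : 0 ≤ fI s y := by
  apply setIntegral_nonneg measurableSet_Ioi
  intro u hu
  have hu : 0 < u := hu
  positivity

lemma fI_anti (s : ℝ) {y₀ y : ℝ} (h0 : 0 < y₀) (h : y₀ ≤ y) : fI s y ≤ fI s y₀ := by
  apply setIntegral_mono_on (fI_integrable s (h0.trans_le h)) (fI_integrable s h0) measurableSet_Ioi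
  intro u hu
  have hu : 0 < u := hu
  gcongr

lemma fI_pos (s : ℝ) {y : ℝ} (hy : 0 < y) : 0 < fI s y := by
  unfold fI
  rw [setIntegral_pos_iff_support_of_nonneg_ae]
  · have : (Function.support fun u : ℝ => u ^ (s - 1) * Real.exp (-u - y / u)) ∩ Ioi 0 = Ioi 0 := by
      apply inter_eq_right.2
      intro u hu
      have hu : 0 < u := hu
      have : 0 < u ^ (s - 1) * Real.exp (-u - y / u) := by positivity
      exact this.ne'
    rw [this]
    simp
  · refine (ae_restrict_iff' measurableSet_Ioi).2 (Eventually.of_forall fun u hu => ?_)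
    have hu : 0 < u := hu
    simp only [Pi.zero_apply]
    positivity
  · exact fI_integrable s hy

lemma fI_hasDerivAt (s : ℝ) {y : ℝ} (hy : 0 < y) :
    HasDerivAt (fI s) (-(fI (s - 1) y)) y := by
  have h := hasDerivAt_integral_of_dominated_loc_of_deriv_le (μ := volume.restrict (Ioi (0 : ℝ)))
    (F := fun y u => u ^ (s - 1) * Real.exp (-u - y / u))
    (F' := fun y u => -(u ^ (s - 1 - 1) * Real.exp (-u - y / u)))
    (bound := fun u => u ^ (s - 1 - 1) * Real.exp (-u - (y / 2) / u))
    (x₀ := y) (s := Ioi (y / 2)) (Ioi_mem_nhds (by linarith))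
    (Eventually.of_forall fun y => fI_meas s y) (fI_integrable s hy)
    (fI_meas (s - 1) y).neg
    ((ae_restrict_iff' measurableSet_Ioi).2 (Eventually.of_forall fun u hu x hx => by
      have hu : 0 < u := hu
      have hx : y / 2 < x := hx
      rw [norm_neg, Real.norm_of_nonneg (by positivity)]
      gcongr))
    (fI_integrable (s - 1) (by positivity))
    ((ae_restrict_iff' measurableSet_Ioi).2 (Eventually.of_forall fun u hu x hx => by
      have hu : 0 < u := hu
      have h1 : HasDerivAt (fun x : ℝ => -u - x / u) (-(1 / u)) x := by
        simpa using ((hasDerivAt_id x).div_const u).const_sub (-u)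
      have h2 := (h1.exp).const_mul (u ^ (s - 1))
      refine h2.congr_deriv ?_
      rw [Real.rpow_sub_one hu.ne' (s - 1)]
      field_simp))
  have h2 := h.2
  rw [integral_neg] at h2
  exact h2

lemma fI_neg (s : ℝ) {y : ℝ} (hy : 0 < y) : fI (-s) y = y ^ (-s) * fI s y := by
  unfold fI
  rw [← integral_comp_rpow_Ioi (fun u : ℝ => u ^ (-s - 1) * Real.exp (-u - y / u))
    (p := -1) (by norm_num)]
  have h := integral_comp_mul_left_Ioi (fun u : ℝ => u ^ (s - 1) * Real.exp (-u - y / u)) 0 hy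
  rw [mul_zero, smul_eq_mul] at h
  have h2 : ∫ u in Ioi (0 : ℝ), u ^ (s - 1) * Real.exp (-u - y / u) =
      y * ∫ x in Ioi (0 : ℝ), (y * x) ^ (s - 1) * Real.exp (-(y * x) - y / (y * x)) := by
    rw [h]; field_simp
  rw [h2, ← integral_const_mul, ← integral_const_mul]
  apply setIntegral_congr_fun measurableSet_Ioi
  intro x hx
  have hx : 0 < x := hx
  simp only [smul_eq_mul]
  rw [Real.rpow_neg_one, Real.mul_rpow hy.le hx.le, Real.inv_rpow hx.le, ← Real.rpow_neg hx.le]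
  have e1 : -x⁻¹ - y / x⁻¹ = -(y * x) - y / (y * x) := by field_simp; ring
  have e2 : y ^ (-s) * (y * (y ^ (s - 1))) = 1 := by
    rw [Real.rpow_sub_one hy.ne', Real.rpow_neg hy.le]
    field_simp
  have e3 : x ^ ((-1 : ℝ) - 1) * x ^ (-(-s - 1)) = x ^ (s - 1) := by
    rw [← Real.rpow_add hx]; congr 1; ring
  rw [e1]
  calc _ = (x ^ ((-1 : ℝ) - 1) * x ^ (-(-s - 1))) * Real.exp (-(y * x) - y / (y * x)) := by
        norm_num; ring
    _ = (y ^ (-s) * (y * (y ^ (s - 1)))) * x ^ (s - 1) * Real.exp (-(y * x) - y / (y * x)) := by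
        rw [e3, e2, one_mul]
    _ = _ := by ring

lemma fI_tendsto {s : ℝ} (hs : 0 < s) : Tendsto (fI s) (𝓝[>] 0) (𝓝 (Real.Gamma s)) := by
  have hG : Real.Gamma s = ∫ u in Ioi (0 : ℝ), u ^ (s - 1) * Real.exp (-1 * u) := by
    rw [Real.Gamma_eq_integral hs]
    congr 1; funext u; rw [neg_one_mul]; ring
  rw [hG]
  apply tendsto_integral_filter_of_dominated_convergence
    (fun u : ℝ => u ^ (s - 1) * Real.exp (-1 * u))
  · exact Eventually.of_forall fun y => fI_meas s y
  · filter_upwards [self_mem_nhdsWithin] with y hy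
    refine (ae_restrict_iff' measurableSet_Ioi).2 (Eventually.of_forall fun u hu => ?_)
    have hu : 0 < u := hu
    have hy : 0 < y := hy
    rw [Real.norm_of_nonneg (by positivity)]
    gcongr
    have : 0 < y / u := by positivity
    linarith
  · exact gamma_int (by linarith) one_pos
  · refine (ae_restrict_iff' measurableSet_Ioi).2 (Eventually.of_forall fun u hu => ?_)
    have hu : 0 < u := hu
    have hc : ContinuousAt (fun y : ℝ => u ^ (s - 1) * Real.exp (-u - y / u)) 0 := by fun_prop
    have := hc.tendsto.mono_left (nhdsWithin_le_nhds (s := Ioi 0))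
    simpa using this

end fint

section repr
open MeasureTheory Set Filter Topology

noncomputable def fR (s y : ℝ) : ℝ :=
  Real.Gamma s * hF (1 - s) y + Real.Gamma (-s) * (y ^ s * hF (1 + s) y)

lemma ok_sub {s : ℝ} (hs : ∀ n : ℤ, s ≠ n) : ∀ n : ℕ, (1 - s) + n ≠ 0 := by
  intro n h
  apply hs (n + 1)
  push_cast
  linarith

lemma nonint_neg {s : ℝ} (hs : ∀ n : ℤ, s ≠ n) : ∀ n : ℤ, -s ≠ n := by
  intro n h
  apply hs (-n)
  push_cast
  linarith

lemma nonint_sub_one {s : ℝ} (hs : ∀ n : ℤ, s ≠ n) : ∀ n : ℤ, s - 1 ≠ n := by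
  intro n h
  apply hs (n + 1)
  push_cast
  linarith

lemma ok_add {s : ℝ} (hs : ∀ n : ℤ, s ≠ n) : ∀ n : ℕ, (1 + s) + n ≠ 0 := by
  have := ok_sub (nonint_neg hs)
  simpa using this

lemma fR_hasDerivAt {s : ℝ} (hs : ∀ n : ℤ, s ≠ n) {y : ℝ} (hy : 0 < y) :
    HasDerivAt (fR s) (-(fR (s - 1) y)) y := by
  have h1 := hF_hasDerivAt (ok_sub hs) y
  have h2 := hF_hasDerivAt (ok_add hs) y
  have h3 := Real.hasDerivAt_rpow_const (x := y) (p := s) (Or.inl hy.ne')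
  have h := (h1.const_mul (Real.Gamma s)).add ((h3.mul h2).const_mul (Real.Gamma (-s)))
  refine h.congr_deriv ?_
  have s0 : s ≠ 0 := by simpa using hs 0
  have s1 : s - 1 ≠ 0 := by
    intro h
    apply hs 1
    push_cast
    linarith
  have s2 : 1 + s ≠ 0 := by simpa using ok_add hs 0
  have s3 : 1 - s ≠ 0 := by simpa using ok_sub hs 0
  have g1 : Real.Gamma s = (s - 1) * Real.Gamma (s - 1) := by
    rw [← Real.Gamma_add_one s1]; ring_nf
  have g2 : Real.Gamma (1 - s) = -s * Real.Gamma (-s) := by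
    rw [← Real.Gamma_add_one (neg_ne_zero.2 s0)]; ring_nf
  have hc : hF s y = hF (s + 1) y + y / s * (hF (s + 1 + 1) y / (s + 1)) := by
    apply hF_contig
    have := ok_add (nonint_sub_one hs)
    simpa using this
  unfold fR
  rw [show (1 : ℝ) - (s - 1) = 1 - s + 1 by ring, show -(s - 1) = 1 - s by ring, 
    show 1 + (s - 1) = s by ring, hc, g2, g1, add_comm s 1, Real.rpow_sub_one hy.ne']
  field_simp
  ring

lemma fR_neg {s : ℝ} {y : ℝ} (hy : 0 < y) :
    fR (-s) y = y ^ (-s) * fR s y := by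
  have : y ^ (-s) * y ^ s = 1 := by rw [← Real.rpow_add hy]; simp
  unfold fR
  rw [neg_neg, sub_neg_eq_add, ← sub_eq_add_neg]
  linear_combination (-(Real.Gamma (-s) * hF (1 + s) y)) * this

lemma fR_tendsto {s : ℝ} (hs : ∀ n : ℤ, s ≠ n) (h0 : 0 < s) :
    Tendsto (fR s) (𝓝[>] 0) (𝓝 (Real.Gamma s)) := by
  have h1 := (hF_hasDerivAt (ok_sub hs) 0).continuousAt
  have h2 := (hF_hasDerivAt (ok_add hs) 0).continuousAt
  have h3 := Real.continuousAt_rpow_const 0 s (Or.inr h0.le)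
  have h : ContinuousAt (fR s) 0 :=
    (h1.const_mul (Real.Gamma s)).add ((h3.mul h2).const_mul (Real.Gamma (-s)))
  have := h.tendsto.mono_left (nhdsWithin_le_nhds (s := Ioi 0))
  have e : fR s 0 = Real.Gamma s := by
    simp [fR, hF_zero, Real.zero_rpow h0.ne']
  rwa [e] at this

lemma nonint_of_mem {s : ℝ} (h0 : 0 < s) (h1 : s < 1) : ∀ n : ℤ, s ≠ n := by
  intro n h
  rw [h] at h0 h1
  have a : 0 < n := by exact_mod_cast h0
  have b : n < 1 := by exact_mod_cast h1
  omega

lemma fI_eq_fR_aux {s : ℝ} (h0 : 0 < s) (h1 : s < 1) {y : ℝ} (hy : 0 < y) : fI s y = fR s y := by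
  have hs := nonint_of_mem h0 h1
  have ht := nonint_of_mem (s := 1 - s) (by linarith) (by linarith)
  set d : ℝ → ℝ := fun y => fI s y - fR s y with hd
  set e : ℝ → ℝ := fun y => fI (1 - s) y - fR (1 - s) y with he
  have dd : ∀ y, 0 < y → HasDerivAt d (-(y ^ (s - 1) * e y)) y := by
    intro y hy
    refine ((fI_hasDerivAt s hy).sub (fR_hasDerivAt hs hy)).congr_deriv ?_
    rw [show s - 1 = -(1 - s) by ring, fI_neg _ hy, fR_neg hy, he]
    ring
  have de : ∀ y, 0 < y → HasDerivAt e (-(y ^ (-s) * d y)) y := by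
    intro y hy
    refine ((fI_hasDerivAt (1 - s) hy).sub (fR_hasDerivAt ht hy)).congr_deriv ?_
    rw [show 1 - s - 1 = -s by ring, fI_neg _ hy, fR_neg hy, hd]
    ring
  set Φ : ℝ → ℝ := fun y => y ^ s / s + y ^ (1 - s) / (1 - s) with hΦ
  have dΦ : ∀ y, 0 < y → HasDerivAt Φ (y ^ (s - 1) + y ^ (-s)) y := by
    intro y hy
    have a := (Real.hasDerivAt_rpow_const (x := y) (p := s) (Or.inl hy.ne')).div_const s
    have b := (Real.hasDerivAt_rpow_const (x := y) (p := 1 - s) (Or.inl hy.ne')).div_const (1 - s)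
    refine (a.add b).congr_deriv ?_
    have : 1 - s ≠ 0 := by linarith
    rw [show 1 - s - 1 = -s by ring]
    field_simp
  set E : ℝ → ℝ := fun y => (d y ^ 2 + e y ^ 2) * Real.exp (-Φ y) with hE
  have dE : ∀ y, 0 < y → HasDerivAt E
      (-((y ^ (s - 1) + y ^ (-s)) * (d y + e y) ^ 2 * Real.exp (-Φ y))) y := by
    intro y hy
    refine ((((dd y hy).pow 2).add ((de y hy).pow 2)).mul (dΦ y hy).neg.exp).congr_deriv ?_
    simp
    ring
  have anti : AntitoneOn E (Ioi 0) := by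
    apply antitoneOn_of_deriv_nonpos (convex_Ioi 0)
    · intro y hy
      exact (dE y hy).continuousAt.continuousWithinAt
    · intro y hy
      rw [interior_Ioi] at hy
      exact (dE y hy).differentiableAt.differentiableWithinAt
    · intro y hy
      rw [interior_Ioi] at hy
      have hy' : 0 < y := hy
      rw [(dE y hy).deriv]
      have : 0 ≤ (y ^ (s - 1) + y ^ (-s)) * (d y + e y) ^ 2 * Real.exp (-Φ y) := by positivity
      linarith
  have lim : Tendsto (fun y => d y ^ 2 + e y ^ 2) (𝓝[>] 0) (𝓝 0) := by
    have a : Tendsto d (𝓝[>] 0) (𝓝 0) := by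
      simpa using (fI_tendsto h0).sub (fR_tendsto hs h0)
    have b : Tendsto e (𝓝[>] 0) (𝓝 0) := by
      simpa using (fI_tendsto (s := 1 - s) (by linarith)).sub (fR_tendsto ht (by linarith))
    simpa using (a.pow 2).add (b.pow 2)
  have hle : E y ≤ 0 := by
    apply ge_of_tendsto lim
    filter_upwards [Ioo_mem_nhdsGT hy] with x hx
    have h1 := anti hx.1 hy hx.2.le
    refine h1.trans ?_
    have hx0 : 0 < x := hx.1
    have : Real.exp (-Φ x) ≤ 1 := by
      rw [Real.exp_le_one_iff]
      have : 0 < 1 - s := by linarith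
      have : 0 ≤ Φ x := by simp only [hΦ]; positivity
      linarith
    simp only [hE]
    exact mul_le_of_le_one_right (by positivity) this
  have hd0 : d y ^ 2 + e y ^ 2 ≤ 0 := by
    by_contra hcon
    push Not at hcon
    have : 0 < E y := by simp only [hE]; positivity
    linarith
  have : d y = 0 := by nlinarith [sq_nonneg (d y), sq_nonneg (e y)]
  simp only [hd] at this
  linarith

lemma fI_eq_fR_step {s : ℝ} (hs : ∀ n : ℤ, s ≠ n) (h : ∀ y, 0 < y → fI s y = fR s y) :
    ∀ y, 0 < y → fI (s - 1) y = fR (s - 1) y := by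
  intro y hy
  have h1 := fI_hasDerivAt s hy
  have h2 := fR_hasDerivAt hs hy
  have h3 : fR s =ᶠ[𝓝 y] fI s := by
    filter_upwards [Ioi_mem_nhds hy] with x hx
    exact (h x hx).symm
  have := (h1.congr_of_eventuallyEq h3).unique h2
  linarith

lemma fI_eq_fR {s : ℝ} (hs : ∀ n : ℤ, s ≠ n) (h0 : s < 0) {y : ℝ} (hy : 0 < y) :
    fI s y = fR s y := by
  have key : ∀ n : ℕ, ∀ y, 0 < y → fI (Int.fract s - n) y = fR (Int.fract s - n) y := by
    intro n
    have hf : 0 < Int.fract s := by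
      rw [Int.fract_pos]
      exact hs _
    have hf1 := Int.fract_lt_one s
    induction n with
    | zero => 
      intro y hy
      simpa using fI_eq_fR_aux hf hf1 hy
    | succ n ih =>
      have : Int.fract s - (n + 1 : ℕ) = Int.fract s - n - 1 := by push_cast; ring
      rw [this]
      apply fI_eq_fR_step _ ih
      intro m hm
      apply nonint_of_mem hf hf1 (m + n)
      push_cast
      linarith
  have hfl : ⌊s⌋ < 0 := by
    rw [Int.floor_lt]; simpa using h0
  have := key (-⌊s⌋).toNat y hy
  have e : ((-⌊s⌋).toNat : ℝ) = -(⌊s⌋ : ℝ) := by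
    have : (((-⌊s⌋).toNat : ℤ) : ℝ) = ((-⌊s⌋ : ℤ) : ℝ) := by
      rw [Int.toNat_of_nonneg (by omega)]
    rw [← Int.cast_neg, ← this]; exact (Int.cast_natCast _).symm
  rw [e, sub_neg_eq_add, Int.fract_add_floor] at this
  exact this

end repr

section lap
open MeasureTheory Set Filter Topology

lemma pow_exp_bound (b : ℝ) {c ε : ℝ} (hc : 0 ≤ c) (hε : 0 < ε) :
    ∃ C : ℝ, 0 < C ∧ ∀ s : ℝ, 0 ≤ s → (1 + c * s) ^ b ≤ C * Real.exp (ε * s) := by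
  obtain ⟨n, hn⟩ := exists_nat_ge b
  set δ := ε / (c + 1) with hδ
  have hδ0 : 0 < δ := by positivity
  have hδc : δ * c ≤ ε := by
    rw [hδ, div_mul_eq_mul_div, div_le_iff₀ (by positivity)]
    nlinarith
  refine ⟨n.factorial / δ ^ n * Real.exp δ, by positivity, fun s hs => ?_⟩
  have h1 : (1 : ℝ) ≤ 1 + c * s := by nlinarith [mul_nonneg hc hs]
  have h0 : (0 : ℝ) ≤ 1 + c * s := by linarith
  calc (1 + c * s) ^ b ≤ (1 + c * s) ^ (n : ℝ) := Real.rpow_le_rpow_of_exponent_le h1 hn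
    _ = (1 + c * s) ^ n := Real.rpow_natCast _ _
    _ = n.factorial / δ ^ n * ((δ * (1 + c * s)) ^ n / n.factorial) := by
        rw [mul_pow]; field_simp
    _ ≤ n.factorial / δ ^ n * Real.exp (δ * (1 + c * s)) := by
        gcongr
        exact Real.pow_div_factorial_le_exp _ (by positivity) n
    _ ≤ n.factorial / δ ^ n * (Real.exp δ * Real.exp (ε * s)) := by
        gcongr
        rw [← Real.exp_add, Real.exp_le_exp]
        nlinarith
    _ = _ := by ring

structure LGood (w : ℝ → ℝ) : Prop where
  meas : Measurable w
  int : ∀ ε : ℝ, 0 < ε → IntegrableOn (fun s => w s * Real.exp (-ε * s)) (Ioi 0)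

noncomputable def lapT (w : ℝ → ℝ) (x : ℝ) : ℝ :=
  ∫ s in Ioi (0 : ℝ), w s * Real.exp (-x * (s + 1))

lemma LGood.int' {w : ℝ → ℝ} (hw : LGood w) {x : ℝ} (hx : 0 < x) :
    IntegrableOn (fun s => w s * Real.exp (-x * (s + 1))) (Ioi 0) := by
  refine ((hw.int x hx).mul_const (Real.exp (-x))).congr ?_
  refine Eventually.of_forall fun s => ?_
  simp only
  rw [mul_assoc, ← Real.exp_add]
  ring_nf

lemma LGood.mul {w : ℝ → ℝ} (hw : LGood w) : LGood (fun s => (s + 1) * w s) := by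
  refine ⟨by have := hw.meas; fun_prop, fun ε hε => ?_⟩
  refine Integrable.mono' (((hw.int (ε / 2) (by positivity)).norm).const_mul (1 + 2 / ε)) ?_ ?_
  · apply Measurable.aestronglyMeasurable
    have := hw.meas
    fun_prop
  · refine (ae_restrict_iff' measurableSet_Ioi).2 (Eventually.of_forall fun s hs => ?_)
    have hs : 0 < s := hs
    rw [norm_mul, norm_mul, norm_mul, Real.norm_of_nonneg (Real.exp_pos _).le,
      Real.norm_of_nonneg (Real.exp_pos _).le, Real.norm_of_nonneg (by positivity)]
    have h1 : s + 1 ≤ (1 + 2 / ε) * Real.exp (ε / 2 * s) := by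
      have := Real.add_one_le_exp (ε / 2 * s)
      calc s + 1 ≤ (1 + 2 / ε) * (ε / 2 * s + 1) := by
            have h : (1 + 2 / ε) * (ε / 2 * s + 1) = s + 1 + (ε / 2 * s + 2 / ε) := by
              field_simp; ring
            rw [h]
            have : 0 ≤ ε / 2 * s + 2 / ε := by positivity
            linarith
        _ ≤ _ := by gcongr
    have h2 : Real.exp (-(ε / 2) * s) = Real.exp (ε / 2 * s) * Real.exp (-ε * s) := by
      rw [← Real.exp_add]; ring_nf
    calc (s + 1) * ‖w s‖ * Real.exp (-ε * s)
        ≤ ((1 + 2 / ε) * Real.exp (ε / 2 * s)) * ‖w s‖ * Real.exp (-ε * s) := by gcongr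
      _ = _ := by rw [h2]; ring

lemma LT_hasDerivAt {w : ℝ → ℝ} (hw : LGood w) {x : ℝ} (hx : 0 < x) :
    HasDerivAt (lapT w) (-(lapT (fun s => (s + 1) * w s) x)) x := by
  have hm := hw.meas
  have hw2 := hw.mul
  have h := hasDerivAt_integral_of_dominated_loc_of_deriv_le (μ := volume.restrict (Ioi (0 : ℝ)))
    (F := fun x s => w s * Real.exp (-x * (s + 1)))
    (F' := fun x s => -((s + 1) * w s * Real.exp (-x * (s + 1))))
    (bound := fun s => ‖(s + 1) * w s * Real.exp (-(x / 2) * (s + 1))‖)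
    (x₀ := x) (s := Ioi (x / 2)) (Ioi_mem_nhds (by linarith))
    (Eventually.of_forall fun y => by
      apply Measurable.aestronglyMeasurable
      fun_prop) (hw.int' hx)
    (by
      apply Measurable.aestronglyMeasurable
      fun_prop)
    ((ae_restrict_iff' measurableSet_Ioi).2 (Eventually.of_forall fun u hu y hy => by
      have hu : 0 < u := hu
      have hy : x / 2 < y := hy
      rw [norm_neg, norm_mul, norm_mul _ (Real.exp (-(x / 2) * (u + 1))),
        Real.norm_of_nonneg (Real.exp_pos _).le, Real.norm_of_nonneg (Real.exp_pos _).le]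
      gcongr))
    (hw2.int' (x := x / 2) (by positivity)).norm
    ((ae_restrict_iff' measurableSet_Ioi).2 (Eventually.of_forall fun u hu y hy => by
      have h1 : HasDerivAt (fun y : ℝ => -y * (u + 1)) (-1 * (u + 1)) y :=
        (hasDerivAt_id y).neg.mul_const (u + 1)
      refine ((h1.exp).const_mul (w u)).congr_deriv ?_
      ring))
  have h2 := h.2
  rw [integral_neg] at h2
  exact h2

lemma LT_nonneg {w : ℝ → ℝ} (h0 : ∀ s, 0 < s → 0 ≤ w s) (x : ℝ) : 0 ≤ lapT w x := by
  apply setIntegral_nonneg measurableSet_Ioi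
  intro u hu
  exact mul_nonneg (h0 u hu) (Real.exp_pos _).le

lemma LT_pos {w : ℝ → ℝ} (hw : LGood w) (h0 : ∀ s, 0 < s → 0 < w s) {x : ℝ} (hx : 0 < x) :
    0 < lapT w x := by
  unfold lapT
  rw [setIntegral_pos_iff_support_of_nonneg_ae]
  · have : (Function.support fun s : ℝ => w s * Real.exp (-x * (s + 1))) ∩ Ioi 0 = Ioi 0 := by
      apply inter_eq_right.2
      intro u hu
      exact (mul_pos (h0 u hu) (Real.exp_pos _)).ne'
    rw [this]
    simp
  · refine (ae_restrict_iff' measurableSet_Ioi).2 (Eventually.of_forall fun u hu => ?_)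
    exact (mul_pos (h0 u hu) (Real.exp_pos _)).le
  · exact hw.int' hx

lemma LT_decay {w : ℝ → ℝ} (hw : LGood w) (h0 : ∀ s, 0 < s → 0 ≤ w s) {x : ℝ} (hx : 1 ≤ x) :
    lapT w x ≤ Real.exp (1 - x) * lapT w 1 := by
  unfold lapT
  rw [← integral_const_mul]
  apply setIntegral_mono_on (hw.int' (by linarith)) ((hw.int' one_pos).const_mul _)
    measurableSet_Ioi
  intro u hu
  have hu' : 0 < u := hu
  have := h0 u hu
  rw [mul_left_comm, ← Real.exp_add]
  gcongr
  nlinarith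

noncomputable def w0 (μ s : ℝ) : ℝ := (s * (s + 2)) ^ μ

lemma w0_pos (μ : ℝ) : ∀ s, 0 < s → 0 < w0 μ s := by
  intro s hs
  unfold w0
  positivity

lemma w0_good {μ : ℝ} (hμ : -1 < μ) : LGood (w0 μ) := by
  refine ⟨by unfold w0; fun_prop, fun ε hε => ?_⟩
  obtain ⟨C, hC, hb⟩ := pow_exp_bound μ (c := 1 / 2) (ε := ε / 2) (by norm_num) (by positivity)
  refine Integrable.mono' ((gamma_int (a := μ) (b := ε / 2) hμ (by positivity)).const_mul
    (2 ^ μ * C)) ?_ ?_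
  · apply Measurable.aestronglyMeasurable
    unfold w0
    fun_prop
  · refine (ae_restrict_iff' measurableSet_Ioi).2 (Eventually.of_forall fun s hs => ?_)
    have hs : 0 < s := hs
    rw [Real.norm_of_nonneg (mul_pos (w0_pos μ s hs) (Real.exp_pos _)).le]
    unfold w0
    rw [show s * (s + 2) = s * (2 * (1 + 1 / 2 * s)) by ring, Real.mul_rpow hs.le (by positivity),
      Real.mul_rpow (by norm_num) (by positivity)]
    have h2 : Real.exp (-(ε / 2) * s) = Real.exp (ε / 2 * s) * Real.exp (-ε * s) := by
      rw [← Real.exp_add]; ring_nf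
    calc _ ≤ s ^ μ * (2 ^ μ * (C * Real.exp (ε / 2 * s))) * Real.exp (-ε * s) := by
          gcongr
          exact hb s hs.le
      _ = _ := by rw [h2]; ring

lemma w0_succ (μ : ℝ) {s : ℝ} (hs : 0 < s) : w0 (μ + 1) s = s * (s + 2) * w0 μ s := by
  unfold w0
  rw [Real.rpow_add_one (by positivity)]
  ring

lemma LT_second {μ : ℝ} (hμ : -1 < μ) {x : ℝ} (hx : 0 < x) :
    lapT (fun s => (s + 1) * ((s + 1) * w0 μ s)) x = lapT (w0 μ) x + lapT (w0 (μ + 1)) x := by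
  unfold lapT
  rw [← integral_add ((w0_good hμ).int' hx) ((w0_good (μ := μ + 1) (by linarith)).int' hx)]
  apply setIntegral_congr_fun measurableSet_Ioi
  intro s hs
  have hs : 0 < s := hs
  simp only
  rw [w0_succ μ hs]
  ring

lemma LT_parts {μ : ℝ} (hμ : -1 < μ) {x : ℝ} (hx : 0 < x) :
    2 * (μ + 1) * lapT (fun s => (s + 1) * w0 μ s) x = x * lapT (w0 (μ + 1)) x := by
  have g1 := (w0_good hμ).mul
  have g2 := w0_good (μ := μ + 1) (by linarith)
  have i1 := (g1.int' hx).const_mul (2 * (μ + 1))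
  have i2 := (g2.int' hx).const_mul x
  have key := integral_Ioi_of_hasDerivAt_of_tendsto (a := 0) (m := 0)
    (f := fun s => w0 (μ + 1) s * Real.exp (-x * (s + 1)))
    (f' := fun s => 2 * (μ + 1) * ((s + 1) * w0 μ s * Real.exp (-x * (s + 1))) -
      x * (w0 (μ + 1) s * Real.exp (-x * (s + 1))))
    (by
      apply ContinuousAt.continuousWithinAt
      apply ContinuousAt.mul
      · unfold w0
        apply ContinuousAt.rpow_const (by fun_prop)
        right; linarith
      · fun_prop)
    (by
      intro s hs
      have hs : 0 < s := hs
      have h1 : HasDerivAt (fun s : ℝ => s * (s + 2)) (1 * (s + 2) + s * 1) s :=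
        (hasDerivAt_id s).mul ((hasDerivAt_id s).add_const 2)
      have h2 := h1.rpow_const (p := μ + 1) (Or.inl (by positivity))
      have h3 : HasDerivAt (fun s : ℝ => -x * (s + 1)) (-x * 1) s :=
        ((hasDerivAt_id s).add_const 1).const_mul (-x)
      refine (h2.mul h3.exp).congr_deriv ?_
      unfold w0
      rw [show μ + 1 - 1 = μ by ring]
      ring)
    (i1.sub i2)
    (by
      obtain ⟨C, hC, hb⟩ := pow_exp_bound (μ + 1) (c := 1) (ε := x / 4) (by norm_num) (by positivity)
      have hb2 : ∀ s, 0 < s → w0 (μ + 1) s * Real.exp (-x * (s + 1)) ≤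
          2 ^ (μ + 1) * C * C * Real.exp (-(x / 2) * s) := by
        intro s hs
        unfold w0
        have e : Real.exp (-x * (s + 1)) ≤ Real.exp (-(x / 2) * s) * Real.exp (-(x / 4) * s)
           * Real.exp (-(x / 4) * s) := by
          rw [← Real.exp_add, ← Real.exp_add, Real.exp_le_exp]; nlinarith
        have e3 : Real.exp (x / 4 * s) * Real.exp (-(x / 4) * s) = 1 := by
          rw [← Real.exp_add]; simp
        have h1 : (s * (s + 2)) ^ (μ + 1) ≤ 2 ^ (μ + 1) * ((1 + 1 * s) ^ (μ + 1) *
            (1 + 1 * s) ^ (μ + 1)) := by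
          rw [← Real.mul_rpow (by positivity) (by positivity),
            ← Real.mul_rpow (by positivity) (by positivity)]
          apply Real.rpow_le_rpow (by positivity) (by nlinarith) (by linarith)
        have h2 := hb s hs.le
        calc _ ≤ (2 ^ (μ + 1) * ((C * Real.exp (x / 4 * s)) * (C * Real.exp (x / 4 * s)))) *
              (Real.exp (-(x / 2) * s) * Real.exp (-(x / 4) * s) * Real.exp (-(x / 4) * s)) := by
              apply mul_le_mul _ e (Real.exp_pos _).le (by positivity)
              refine h1.trans ?_
              gcongr
          _ = 2 ^ (μ + 1) * C * C * Real.exp (-(x / 2) * s) *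
              (Real.exp (x / 4 * s) * Real.exp (-(x / 4) * s)) *
              (Real.exp (x / 4 * s) * Real.exp (-(x / 4) * s)) := by ring
          _ = _ := by rw [e3]; ring
      apply squeeze_zero' (g := fun s => 2 ^ (μ + 1) * C * C * Real.exp (-(x / 2) * s))
      · filter_upwards [eventually_gt_atTop 0] with s hs
        exact (mul_pos (w0_pos _ s hs) (Real.exp_pos _)).le
      · filter_upwards [eventually_gt_atTop 0] with s hs
        exact hb2 s hs
      · have : Tendsto (fun s => Real.exp (-(x / 2) * s)) atTop (𝓝 0) := by
          apply Real.tendsto_exp_atBot.comp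
          apply Tendsto.const_mul_atTop_of_neg (by linarith) tendsto_id
        simpa using this.const_mul (2 ^ (μ + 1) * C * C))
  rw [integral_sub i1 i2, integral_const_mul, integral_const_mul] at key
  have z : w0 (μ + 1) 0 = 0 := by
    unfold w0
    rw [zero_mul, Real.zero_rpow (by linarith)]
  simp only [z, zero_mul, sub_zero] at key
  unfold lapT
  linarith

lemma fI_eq_LT {ν : ℝ} (hν : 0 < ν) :
    ∃ c : ℝ, 0 < c ∧ ∀ x, 0 < x → fI (-ν) (x ^ 2 / 4) = c * lapT (w0 (ν - 1 / 2)) x := by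
  set μ := ν - 1 / 2 with hμ
  have hμ1 : -1 < μ := by linarith
  set p : ℝ → ℝ := fun x => fI (-ν) (x ^ 2 / 4) with hp
  set q : ℝ → ℝ := fun x => fI (ν + 1) (x ^ 2 / 4) with hq
  set G : ℝ → ℝ := lapT (w0 μ) with hG
  set T : ℝ → ℝ := lapT (fun s => (s + 1) * w0 μ s) with hT
  set a : ℝ := 2 * ν + 1 with ha
  have sq : ∀ x : ℝ, 0 < x → ∀ t : ℝ, (x ^ 2 / 4) ^ t = (x / 2) ^ (2 * t) := by
    intro x hx t
    rw [Real.rpow_mul (by positivity), show x ^ 2 / 4 = (x / 2) ^ (2 : ℝ) by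
      rw [Real.rpow_two]; ring]
  have dsq : ∀ x : ℝ, HasDerivAt (fun x : ℝ => x ^ 2 / 4) (x / 2) x := by
    intro x
    refine ((hasDerivAt_pow 2 x).div_const 4).congr_deriv ?_
    norm_num; ring
  have ar : ∀ x : ℝ, 0 < x → (x / 2) ^ a * (x / 2) ^ (-a) = 1 := by
    intro x hx
    rw [← Real.rpow_add (by positivity)]; simp
  have dp : ∀ x, 0 < x → HasDerivAt p (-((x / 2) ^ (-a) * q x)) x := by
    intro x hx
    have hx2 : 0 < x ^ 2 / 4 := by positivity
    refine ((fI_hasDerivAt (-ν) hx2).comp x (dsq x)).congr_deriv ?_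
    rw [show -ν - 1 = -(ν + 1) by ring, fI_neg _ hx2, sq x hx, ha,
      show -(2 * ν + 1) = 2 * (-(ν + 1)) + 1 by ring, Real.rpow_add_one (by positivity)]
    simp only [hq]
    ring
  have dq : ∀ x, 0 < x → HasDerivAt q (-((x / 2) ^ a * p x)) x := by
    intro x hx
    have hx2 : 0 < x ^ 2 / 4 := by positivity
    refine ((fI_hasDerivAt (ν + 1) hx2).comp x (dsq x)).congr_deriv ?_
    have e := fI_neg (-ν) hx2
    rw [neg_neg] at e
    rw [show ν + 1 - 1 = ν by ring, e, sq x hx, ha, Real.rpow_add_one (by positivity)]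
    simp only [hp]
    ring
  have dG : ∀ x, 0 < x → HasDerivAt G (-T x) x := fun x hx => LT_hasDerivAt (w0_good hμ1) hx
  have dQ : ∀ x, 0 < x → HasDerivAt (fun x => (x / 2) ^ a * T x) (-((x / 2) ^ a * G x)) x := by
    intro x hx
    have h1 := LT_hasDerivAt (w0_good hμ1).mul hx
    have h2 : HasDerivAt (fun x : ℝ => (x / 2) ^ a) (1 / 2 * a * (x / 2) ^ (a - 1)) x :=
      ((hasDerivAt_id x).div_const 2).rpow_const (Or.inl (by simp; positivity))
    refine (h2.mul h1).congr_deriv ?_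
    have h3 := LT_parts hμ1 hx
    rw [show 2 * (μ + 1) = a by rw [hμ, ha]; ring] at h3
    rw [LT_second hμ1 hx, Real.rpow_sub_one (by positivity)]
    have h4 : lapT (w0 (μ + 1)) x = a * T x / x := by
      rw [eq_div_iff hx.ne', hT, h3]; ring
    rw [h4]
    field_simp
    ring
  have Gpos : ∀ x, 0 < x → 0 < G x := fun x hx => LT_pos (w0_good hμ1) (w0_pos μ) hx
  have w1n : ∀ s : ℝ, 0 < s → 0 ≤ (s + 1) * w0 μ s := fun s hs =>
    mul_nonneg (by positivity) (w0_pos μ s hs).le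
  -- Wronskian
  set W : ℝ → ℝ := fun x => p x * ((x / 2) ^ a * T x) - q x * G x with hW
  have dW : ∀ x, 0 < x → HasDerivAt W 0 x := by
    intro x hx
    refine (((dp x hx).mul (dQ x hx)).sub ((dq x hx).mul (dG x hx))).congr_deriv ?_
    have := ar x hx
    linear_combination (- q x * T x) * this
  have Wc : ∀ x y, 0 < x → 0 < y → W x = W y := by
    intro x y hx hy
    exact IsOpen.is_const_of_deriv_eq_zero isOpen_Ioi isPreconnected_Ioi
      (fun z hz => (dW z hz).differentiableAt.differentiableWithinAt)
      (fun z hz => (dW z hz).deriv) hx hy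
  have Wlim : Tendsto W atTop (𝓝 0) := by
    have hb : ∀ x, 2 ≤ x → ‖W x‖ ≤ fI (-ν) 1 * (x ^ a * (Real.exp (1 - x) * T 1)) +
        fI (ν + 1) 1 * (Real.exp (1 - x) * G 1) := by
      intro x hx
      have hx0 : 0 < x := by linarith
      have h1 : 1 ≤ x ^ 2 / 4 := by nlinarith
      have p1 : p x ≤ fI (-ν) 1 := fI_anti _ one_pos h1
      have q1 : q x ≤ fI (ν + 1) 1 := fI_anti _ one_pos h1
      have p0 : 0 ≤ p x := fI_nonneg _ _
      have q0 : 0 ≤ q x := fI_nonneg _ _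
      have G1 : G x ≤ Real.exp (1 - x) * G 1 :=
        LT_decay (w0_good hμ1) (fun s hs => (w0_pos μ s hs).le) (by linarith)
      have T1 : T x ≤ Real.exp (1 - x) * T 1 :=
        LT_decay (w0_good hμ1).mul w1n (by linarith)
      have T0 : 0 ≤ T x := LT_nonneg w1n x
      have T0' : 0 ≤ T 1 := LT_nonneg w1n 1
      have G0 := Gpos x hx0
      have G0' := Gpos 1 one_pos
      have a0 : 0 ≤ a := by rw [ha]; linarith
      have f1 := fI_nonneg (-ν) 1
      have f2 := fI_nonneg (ν + 1) 1
      refine (norm_sub_le _ _).trans ?_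
      rw [Real.norm_of_nonneg (by positivity), Real.norm_of_nonneg (by positivity)]
      gcongr
      linarith
    apply squeeze_zero_norm' (a := fun x => fI (-ν) 1 * (x ^ a * (Real.exp (1 - x) * T 1)) +
        fI (ν + 1) 1 * (Real.exp (1 - x) * G 1))
    · filter_upwards [eventually_ge_atTop 2] with x hx
      exact hb x hx
    · have l1 : Tendsto (fun x : ℝ => x ^ a * Real.exp (-x)) atTop (𝓝 0) := by
        have := tendsto_rpow_mul_exp_neg_mul_atTop_nhds_zero a 1 one_pos
        simpa using this
      have l2 : Tendsto (fun x : ℝ => Real.exp (-x)) atTop (𝓝 0) :=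
        Real.tendsto_exp_neg_atTop_nhds_zero
      have := (l1.const_mul (fI (-ν) 1 * Real.exp 1 * T 1)).add
        (l2.const_mul (fI (ν + 1) 1 * Real.exp 1 * G 1))
      rw [mul_zero, mul_zero, add_zero] at this
      refine this.congr fun x => ?_
      rw [sub_eq_add_neg, Real.exp_add]
      ring
  have W0 : ∀ x, 0 < x → W x = 0 := by
    intro x hx
    have : Tendsto W atTop (𝓝 (W x)) := by
      apply tendsto_const_nhds.congr'
      filter_upwards [eventually_gt_atTop 0] with y hy
      exact Wc x y hx hy
    exact tendsto_nhds_unique this Wlim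
  have dr : ∀ x, 0 < x → HasDerivAt (fun x => p x / G x) 0 x := by
    intro x hx
    refine ((dp x hx).div (dG x hx) (Gpos x hx).ne').congr_deriv ?_
    have h1 := W0 x hx
    simp only [hW] at h1
    have h2 := ar x hx
    rw [div_eq_zero_iff]
    left
    linear_combination (x / 2) ^ (-a) * h1 - p x * T x * h2
  refine ⟨p 1 / G 1, div_pos (fI_pos _ (by norm_num)) (Gpos 1 one_pos), fun x hx => ?_⟩
  have := IsOpen.is_const_of_deriv_eq_zero isOpen_Ioi isPreconnected_Ioi
      (fun z hz => (dr z hz).differentiableAt.differentiableWithinAt)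
      (fun z hz => (dr z hz).deriv) (mem_Ioi.2 hx) (mem_Ioi.2 one_pos)
  rw [← this]
  have := (Gpos x hx).ne'
  field_simp
  rfl

end lap

section hankel
open MeasureTheory Set Filter Topology

lemma rpow_between {a x b : ℝ} (μ : ℝ) (ha : 0 < a) (h1 : a ≤ x) (h2 : x ≤ b) :
    x ^ μ ≤ a ^ μ + b ^ μ := by
  have hx : 0 < x := ha.trans_le h1
  have hb : 0 < b := hx.trans_le h2
  rcases le_total 0 μ with h | h
  · have := Real.rpow_le_rpow hx.le h2 h
    have : 0 < a ^ μ := by positivity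
    linarith
  · have := Real.rpow_le_rpow_of_nonpos ha h1 h
    have : 0 < b ^ μ := by positivity
    linarith

/-- integrand -/
noncomputable def hI (μ : ℝ) (z : ℂ) (s : ℝ) : ℂ :=
  ((Real.exp (-s) * s ^ μ : ℝ) : ℂ) * (1 + s / (2 * z)) ^ (μ : ℂ)

noncomputable def hH (μ : ℝ) (z : ℂ) : ℂ := ∫ s in Ioi (0 : ℝ), hI μ z s

lemma hI_meas (μ : ℝ) (z : ℂ) : Measurable (hI μ z) := by
  unfold hI
  fun_prop

lemma hI_norm (μ : ℝ) (z : ℂ) {s : ℝ} (hs : 0 < s) :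
    ‖hI μ z s‖ = Real.exp (-s) * s ^ μ * ‖1 + s / (2 * z)‖ ^ μ := by
  unfold hI
  rw [norm_mul, Complex.norm_cpow_real, Complex.norm_real, Real.norm_of_nonneg (by positivity)]

lemma slit_bounds {z₀ : ℂ} {ε : ℝ} (hε : 0 < ε)
    (hb : Metric.ball z₀ (2 * ε) ⊆ Complex.slitPlane) {z : ℂ} (hz : z ∈ Metric.ball z₀ ε) {s : ℝ}
    (hs : 0 ≤ s) :
    ε ≤ ‖z‖ ∧ ε / (‖z₀‖ + ε) ≤ ‖1 + s / (2 * z)‖ ∧ ‖1 + s / (2 * z)‖ ≤ 1 + 1 / (2 * ε) * s ∧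
      1 + s / (2 * z) ∈ Complex.slitPlane := by
  have key : ∀ t : ℝ, 0 ≤ t → ε ≤ ‖z + t‖ := by
    intro t ht
    by_contra hcon
    push Not at hcon
    have hm : ((-t : ℝ) : ℂ) ∈ Metric.ball z₀ (2 * ε) := by
      rw [Metric.mem_ball]
      have h1 : dist ((-t : ℝ) : ℂ) z < ε := by
        rw [dist_comm, dist_eq_norm]
        simpa using hcon
      have h2 := Metric.mem_ball.1 hz
      have := dist_triangle ((-t : ℝ) : ℂ) z z₀
      linarith
    have := hb hm
    rw [Complex.ofReal_mem_slitPlane] at this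
    linarith
  have hz1 : ε ≤ ‖z‖ := by simpa using key 0 le_rfl
  have hz0 : z ≠ 0 := by
    intro h
    rw [h, norm_zero] at hz1
    linarith
  have hzs : z ∈ Complex.slitPlane := hb (Metric.ball_subset_ball (by linarith) hz)
  have hz2 : ‖z‖ ≤ ‖z₀‖ + ε := by
    have h2 := Metric.mem_ball.1 hz
    rw [dist_eq_norm] at h2
    have := norm_sub_norm_le z z₀
    linarith
  have hpos : 0 < ‖z‖ := by linarith
  refine ⟨hz1, ?_, ?_, ?_⟩
  · have e : (1 : ℂ) + s / (2 * z) = (z + (s / 2 : ℝ)) / z := by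
      push_cast
      field_simp
    rw [e, norm_div]
    have := key (s / 2) (by positivity)
    gcongr
  · refine (norm_add_le _ _).trans ?_
    rw [norm_one, norm_div, norm_mul, Complex.norm_real, Real.norm_of_nonneg hs]
    simp only [Complex.norm_ofNat]
    have : s / (2 * ‖z‖) ≤ s / (2 * ε) := by gcongr
    have e : s / (2 * ε) = 1 / (2 * ε) * s := by ring
    linarith
  · rw [Complex.mem_slitPlane_iff_not_le_zero]
    intro hle
    rw [Complex.le_def] at hle
    simp only [Complex.zero_re, Complex.zero_im] at hle
    obtain ⟨h1, h2⟩ := hle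
    set u : ℂ := 1 + s / (2 * z) with hu
    have hur : u = (u.re : ℂ) := by
      apply Complex.ext <;> simp [h2]
    have hs2 : (s : ℂ) = 2 * z * (u.re - 1) := by
      rw [← hur, hu]; field_simp; ring
    have hre : (u.re - 1 : ℝ) < 0 := by linarith
    have hz3 : z = ((s / (2 * (u.re - 1)) : ℝ) : ℂ) := by
      push_cast
      have : ((u.re : ℂ) - 1) ≠ 0 := by
        have : ((u.re - 1 : ℝ) : ℂ) ≠ 0 := by exact_mod_cast hre.ne
        push_cast at this
        exact this
      rw [hs2]
      field_simp
    rw [hz3, Complex.ofReal_mem_slitPlane] at hzs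
    have : s / (2 * (u.re - 1)) ≤ 0 := div_nonpos_of_nonneg_of_nonpos hs (by linarith)
    linarith

lemma hH_differentiableAt {μ : ℝ} (hμ : -1 < μ) {z₀ : ℂ} (hz₀ : z₀ ∈ Complex.slitPlane) :
    DifferentiableAt ℂ (hH μ) z₀ := by
  obtain ⟨ε', hε', hb'⟩ := Metric.isOpen_iff.1 Complex.isOpen_slitPlane z₀ hz₀
  set ε := ε' / 2 with hεd
  have hε : 0 < ε := by positivity
  have hb : Metric.ball z₀ (2 * ε) ⊆ Complex.slitPlane := by
    rw [hεd, show 2 * (ε' / 2) = ε' by ring]; exact hb'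
  set δ := ε / (‖z₀‖ + ε) with hδ
  have hδ0 : 0 < δ := by positivity
  have bnd : ∀ b : ℝ, ∃ C : ℝ, 0 < C ∧ ∀ s : ℝ, 0 < s → ∀ z ∈ Metric.ball z₀ ε,
      ‖1 + s / (2 * z)‖ ^ b ≤ C * Real.exp (1 / 2 * s) := by
    intro b
    obtain ⟨C, hC, h⟩ := pow_exp_bound b (c := 1 / (2 * ε)) (ε := 1 / 2) (by positivity)
      (by norm_num)
    refine ⟨δ ^ b + C, by positivity, fun s hs z hz => ?_⟩
    obtain ⟨-, h1, h2, -⟩ := slit_bounds hε hb hz hs.le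
    have h3 := rpow_between b hδ0 h1 h2
    have h4 := h s hs.le
    have h5 : 1 ≤ Real.exp (1 / 2 * s) := Real.one_le_exp (by positivity)
    have h6 : 0 < δ ^ b := by positivity
    nlinarith
  obtain ⟨C0, hC0, h0⟩ := bnd μ
  obtain ⟨C1, hC1, h1⟩ := bnd (μ - 1)
  have ex : ∀ s : ℝ, Real.exp (-(1 / 2) * s) = Real.exp (-s) * Real.exp (1 / 2 * s) := by
    intro s
    rw [← Real.exp_add]; ring_nf
  have h := hasDerivAt_integral_of_dominated_loc_of_deriv_le (μ := volume.restrict (Ioi (0 : ℝ)))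
    (F := fun z s => hI μ z s)
    (F' := fun z s => ((Real.exp (-s) * s ^ μ : ℝ) : ℂ) *
      ((μ : ℂ) * (1 + s / (2 * z)) ^ ((μ : ℂ) - 1) * (-(s / (2 * z ^ 2)))))
    (bound := fun s => |μ| * C1 / (2 * ε ^ 2) * (s ^ (μ + 1) * Real.exp (-(1 / 2) * s)))
    (x₀ := z₀) (s := Metric.ball z₀ ε) (Metric.ball_mem_nhds _ hε)
    (Eventually.of_forall fun z => (hI_meas μ z).aestronglyMeasurable)
    (by
      refine Integrable.mono' ((gamma_int (a := μ) (b := 1 / 2) hμ (by norm_num)).const_mul C0)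
        (hI_meas μ z₀).aestronglyMeasurable ?_
      refine (ae_restrict_iff' measurableSet_Ioi).2 (Eventually.of_forall fun s hs => ?_)
      have hs : 0 < s := hs
      rw [hI_norm μ z₀ hs, ex]
      calc _ ≤ Real.exp (-s) * s ^ μ * (C0 * Real.exp (1 / 2 * s)) := by
            gcongr
            exact h0 s hs z₀ (Metric.mem_ball_self hε)
        _ = _ := by ring)
    (by
      apply Measurable.aestronglyMeasurable
      fun_prop)
    ((ae_restrict_iff' measurableSet_Ioi).2 (Eventually.of_forall fun s hs z hz => by
      have hs : 0 < s := hs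
      obtain ⟨hz1, -, -, -⟩ := slit_bounds hε hb hz hs.le
      have e : ((μ : ℂ) - 1) = ((μ - 1 : ℝ) : ℂ) := by push_cast; ring
      rw [e, norm_mul, norm_mul, norm_mul, Complex.norm_cpow_real, norm_neg, norm_div, norm_mul,
        norm_pow, Complex.norm_real, Complex.norm_real, Complex.norm_real,
        Real.norm_of_nonneg hs.le, Real.norm_of_nonneg (by positivity : 0 ≤ Real.exp (-s) * s ^ μ),
        Real.norm_eq_abs, ex, Real.rpow_add_one hs.ne', Complex.norm_ofNat]
      have := h1 s hs z hz
      calc _ ≤ Real.exp (-s) * s ^ μ * (|μ| * (C1 * Real.exp (1 / 2 * s)) * (s / (2 * ε ^ 2))) := by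
            gcongr
        _ = _ := by ring))
    ((gamma_int (a := μ + 1) (b := 1 / 2) (by linarith) (by norm_num)).const_mul _)
    ((ae_restrict_iff' measurableSet_Ioi).2 (Eventually.of_forall fun s hs z hz => by
      have hs : 0 < s := hs
      obtain ⟨hz1, -, -, hsl⟩ := slit_bounds hε hb hz hs.le
      have hz0 : z ≠ 0 := by
        intro h
        rw [h, norm_zero] at hz1
        linarith
      have d1 : HasDerivAt (fun z : ℂ => 1 + (s : ℂ) / (2 * z)) (-(s / (2 * z ^ 2))) z := by
        have a := ((hasDerivAt_inv hz0).const_mul ((s : ℂ) / 2)).const_add 1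
        refine (a.congr_of_eventuallyEq ?_).congr_deriv ?_
        · refine Eventually.of_forall fun w => ?_
          simp only
          rw [← div_eq_mul_inv, div_div]
        · field_simp
      exact (d1.cpow_const hsl).const_mul _))
  exact h.2.differentiableAt

lemma hH_real (μ : ℝ) {x : ℝ} (hx : 0 < x) :
    ((lapT (w0 μ) x : ℝ) : ℂ) = ((Real.exp (-x) * 2 ^ μ * x ^ (-μ) * x⁻¹ : ℝ) : ℂ) * hH μ x := by
  have h1 : hH μ x = ((∫ s in Ioi (0 : ℝ), Real.exp (-s) * s ^ μ * (1 + s / (2 * x)) ^ μ : ℝ) : ℂ) := by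
    unfold hH
    rw [← integral_complex_ofReal]
    apply setIntegral_congr_fun measurableSet_Ioi
    intro s hs
    have hs : 0 < s := hs
    simp only [hI]
    rw [Complex.ofReal_mul _ ((1 + s / (2 * x)) ^ μ), Complex.ofReal_cpow (by positivity)]
    push_cast
    rfl
  rw [h1, ← Complex.ofReal_mul]
  congr 1
  have h := integral_comp_mul_left_Ioi
    (fun s : ℝ => Real.exp (-s) * s ^ μ * (1 + s / (2 * x)) ^ μ) 0 hx
  rw [mul_zero, smul_eq_mul] at h
  rw [mul_assoc, ← h, ← integral_const_mul]
  unfold lapT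
  apply setIntegral_congr_fun measurableSet_Ioi
  intro s hs
  have hs : 0 < s := hs
  simp only [w0]
  rw [show 1 + x * s / (2 * x) = (s + 2) / 2 by field_simp; ring, Real.mul_rpow hs.le (by positivity),
    Real.mul_rpow hx.le hs.le, Real.div_rpow (by positivity) (by norm_num), Real.rpow_neg hx.le,
    show -x * (s + 1) = -x + -(x * s) by ring, Real.exp_add]
  field_simp

end hankel

section asym
open MeasureTheory Set Filter Topology

noncomputable def kk (μ t : ℝ) : ℝ := |1 - t| ^ μ + (1 + t) ^ μ

lemma kk_int {μ : ℝ} (hμ : -1 < μ) :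
    IntegrableOn (fun t => Real.exp (-t) * t ^ μ * kk μ t) (Ioi (1 / 2)) := by
  have hΦ : Integrable ((Ioi (0 : ℝ)).indicator (fun v => v ^ μ * Real.exp (-(1 / 2) * v))) := by
    rw [integrable_indicator_iff measurableSet_Ioi]
    exact gamma_int hμ (by norm_num)
  set Φ := (Ioi (0 : ℝ)).indicator (fun v => v ^ μ * Real.exp (-(1 / 2) * v)) with hΦd
  obtain ⟨C, hC, hb⟩ := pow_exp_bound μ (c := 1) (ε := 1 / 2) (by norm_num) (by norm_num)
  have i1 : Integrable (fun t => Φ (t - 1)) := hΦ.comp_sub_right 1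
  have i2 : Integrable (fun t => Φ (1 - t)) := hΦ.comp_sub_left 1
  have i3 : IntegrableOn (fun t => t ^ μ * Real.exp (-(1 / 2) * t)) (Ioi (1 / 2)) :=
    (gamma_int hμ (by norm_num)).mono_set (Ioi_subset_Ioi (by norm_num))
  set D := (1 / 2 : ℝ) ^ μ + C with hD
  have hD0 : 0 < D := by positivity
  have hbd := (((i1.add i2).const_mul (D * Real.exp 1)).integrableOn (s := Ioi (1 / 2))).add
    (i3.const_mul C)
  refine Integrable.mono' hbd ?_ ?_
  · apply Measurable.aestronglyMeasurable
    unfold kk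
    fun_prop
  · rw [ae_restrict_iff' measurableSet_Ioi]
    have hne : ∀ᵐ t : ℝ, t ≠ 1 := by
      rw [ae_iff]; simp
    filter_upwards [hne] with t ht1 ht
    have ht : 1 / 2 < t := ht
    have ht0 : 0 < t := by linarith
    have habs : 0 < |1 - t| := by
      rw [abs_pos]; intro h; apply ht1; linarith
    have kpos : 0 < kk μ t := by unfold kk; positivity
    rw [Real.norm_of_nonneg (by positivity)]
    have ex : Real.exp (-t) = Real.exp (-(1 / 2) * t) * Real.exp (-(1 / 2) * t) := by
      rw [← Real.exp_add]; ring_nf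
    have e1 : Real.exp (1 / 2 * t) * Real.exp (-(1 / 2) * t) = 1 := by
      rw [← Real.exp_add]; simp
    have p1 : t ^ μ ≤ D * Real.exp (1 / 2 * t) := by
      have a := rpow_between μ (by norm_num : (0 : ℝ) < 1 / 2) ht.le (by linarith : t ≤ 1 + 1 * t)
      have b := hb t ht0.le
      have c : 1 ≤ Real.exp (1 / 2 * t) := Real.one_le_exp (by positivity)
      have d : (0 : ℝ) < (1 / 2) ^ μ := by positivity
      rw [hD]
      nlinarith
    have Φn : ∀ v, 0 ≤ Φ v := by
      intro v
      apply indicator_nonneg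
      intro v hv
      have hv : 0 < v := hv
      positivity
    have p2 : |1 - t| ^ μ * Real.exp (-(1 / 2) * t) ≤ Real.exp 1 * (Φ (t - 1) + Φ (1 - t)) := by
      rcases lt_or_gt_of_ne ht1 with h | h
      · have : Φ (1 - t) = (1 - t) ^ μ * Real.exp (-(1 / 2) * (1 - t)) :=
          indicator_of_mem (by simpa using h) _
        have h0 : 0 < 1 - t := by linarith
        rw [abs_of_pos h0]
        calc (1 - t) ^ μ * Real.exp (-(1 / 2) * t)
            ≤ (1 - t) ^ μ * Real.exp (1 + -(1 / 2) * (1 - t)) := by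
              gcongr; linarith
          _ = Real.exp 1 * Φ (1 - t) := by rw [this, Real.exp_add]; ring
          _ ≤ _ := by
              gcongr
              linarith [Φn (t - 1)]
      · have : Φ (t - 1) = (t - 1) ^ μ * Real.exp (-(1 / 2) * (t - 1)) :=
          indicator_of_mem (by simpa using h) _
        have h0 : 0 < t - 1 := by linarith
        rw [abs_sub_comm, abs_of_pos h0]
        calc (t - 1) ^ μ * Real.exp (-(1 / 2) * t)
            ≤ (t - 1) ^ μ * Real.exp (1 + -(1 / 2) * (t - 1)) := by
              gcongr; linarith
          _ = Real.exp 1 * Φ (t - 1) := by rw [this, Real.exp_add]; ring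
          _ ≤ _ := by
              gcongr
              linarith [Φn (1 - t)]
    have p3 := hb t ht0.le
    rw [one_mul] at p3
    unfold kk
    have q1 : Real.exp (-t) * t ^ μ * |1 - t| ^ μ ≤ D * Real.exp 1 * (Φ (t - 1) + Φ (1 - t)) := by
      calc Real.exp (-t) * t ^ μ * |1 - t| ^ μ
          ≤ Real.exp (-t) * (D * Real.exp (1 / 2 * t)) * |1 - t| ^ μ := by gcongr
        _ = D * (Real.exp (1 / 2 * t) * Real.exp (-(1 / 2) * t)) *
            (|1 - t| ^ μ * Real.exp (-(1 / 2) * t)) := by rw [ex]; ring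
        _ ≤ D * 1 * (Real.exp 1 * (Φ (t - 1) + Φ (1 - t))) := by
            rw [e1]; gcongr
        _ = _ := by ring
    have q2 : Real.exp (-t) * t ^ μ * (1 + t) ^ μ ≤ C * (t ^ μ * Real.exp (-(1 / 2) * t)) := by
      calc Real.exp (-t) * t ^ μ * (1 + t) ^ μ
          ≤ Real.exp (-t) * t ^ μ * (C * Real.exp (1 / 2 * t)) := by gcongr
        _ = C * (t ^ μ * Real.exp (-(1 / 2) * t)) *
            (Real.exp (1 / 2 * t) * Real.exp (-(1 / 2) * t)) := by rw [ex]; ring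
        _ = _ := by rw [e1, mul_one]
    rw [mul_add]
    exact add_le_add q1 q2

lemma tail_bound {μ : ℝ} (hμ : -1 < μ) {r : ℝ} (hr : 1 ≤ r) :
    IntegrableOn (fun s => Real.exp (-s) * s ^ μ * kk μ (s / (2 * r))) (Ioi r) ∧
    ∫ s in Ioi r, Real.exp (-s) * s ^ μ * kk μ (s / (2 * r)) ≤
      (2 * r) * ((2 * r) ^ μ * Real.exp (-(2 * r - 1) / 2) *
        ∫ t in Ioi (1 / 2 : ℝ), Real.exp (-t) * t ^ μ * kk μ t) := by
  have h2r : 0 < 2 * r := by linarith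
  have kn : ∀ t : ℝ, 1 / 2 < t → 0 ≤ kk μ t := by
    intro t ht
    unfold kk
    have : 0 < 1 + t := by linarith
    positivity
  have hle : ∀ t : ℝ, 1 / 2 < t → Real.exp (-(2 * r * t)) * (2 * r * t) ^ μ *
      kk μ (2 * r * t / (2 * r)) ≤ (2 * r) ^ μ * Real.exp (-(2 * r - 1) / 2) *
        (Real.exp (-t) * t ^ μ * kk μ t) := by
    intro t ht
    have ht0 : 0 < t := by linarith
    have := kn t ht
    rw [mul_div_cancel_left₀ _ h2r.ne', Real.mul_rpow h2r.le ht0.le]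
    have e : Real.exp (-(2 * r * t)) ≤ Real.exp (-(2 * r - 1) / 2) * Real.exp (-t) := by
      rw [← Real.exp_add, Real.exp_le_exp]
      nlinarith
    calc _ ≤ (Real.exp (-(2 * r - 1) / 2) * Real.exp (-t)) * ((2 * r) ^ μ * t ^ μ) * kk μ t := by
          gcongr
      _ = _ := by ring
  have i0 := (kk_int hμ).const_mul ((2 * r) ^ μ * Real.exp (-(2 * r - 1) / 2))
  have i1 : IntegrableOn (fun t => Real.exp (-(2 * r * t)) * (2 * r * t) ^ μ *
      kk μ (2 * r * t / (2 * r))) (Ioi (1 / 2)) := by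
    refine Integrable.mono' i0 ?_ ?_
    · apply Measurable.aestronglyMeasurable
      unfold kk
      fun_prop
    · refine (ae_restrict_iff' measurableSet_Ioi).2 (Eventually.of_forall fun t ht => ?_)
      have ht' : 1 / 2 < t := ht
      have ht0 : 0 < t := by linarith
      have := kn t ht
      rw [Real.norm_of_nonneg]
      · exact hle t ht
      · rw [mul_div_cancel_left₀ _ h2r.ne']
        positivity
  have hrr : 2 * r * (1 / 2) = r := by ring
  constructor
  · have := (integrableOn_Ioi_comp_mul_left_iff
      (fun s => Real.exp (-s) * s ^ μ * kk μ (s / (2 * r))) (1 / 2) h2r).1 i1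
    rwa [hrr] at this
  · have := integral_comp_mul_left_Ioi
      (fun s => Real.exp (-s) * s ^ μ * kk μ (s / (2 * r))) (1 / 2) h2r
    rw [hrr, smul_eq_mul] at this
    have e : ∫ s in Ioi r, Real.exp (-s) * s ^ μ * kk μ (s / (2 * r)) = (2 * r) *
      ∫ t in Ioi (1 / 2 : ℝ), Real.exp (-(2 * r * t)) * (2 * r * t) ^ μ *
      kk μ (2 * r * t / (2 * r)) := by
      rw [this]; field_simp
    rw [e, ← integral_const_mul ((2 * r) ^ μ * Real.exp (-(2 * r - 1) / 2))]
    apply mul_le_mul_of_nonneg_left _ h2r.le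
    exact setIntegral_mono_on i1 i0 measurableSet_Ioi hle

lemma hI_tail_bound (μ : ℝ) {z : ℂ} (hz : 1 ≤ ‖z‖) {s : ℝ} (hs : 0 < s) (hne : s ≠ 2 * ‖z‖) :
    ‖hI μ z s‖ ≤ Real.exp (-s) * s ^ μ * kk μ (s / (2 * ‖z‖)) := by
  rw [hI_norm μ z hs]
  unfold kk
  have hn : ‖(s : ℂ) / (2 * z)‖ = s / (2 * ‖z‖) := by
    rw [norm_div, norm_mul, Complex.norm_real, Real.norm_of_nonneg hs.le, Complex.norm_ofNat]
  gcongr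
  apply rpow_between
  · rw [abs_pos]
    intro h
    apply hne
    have h2 : 0 < 2 * ‖z‖ := by linarith
    field_simp at h
    linarith
  · have := abs_norm_sub_norm_le (1 : ℂ) (-((s : ℂ) / (2 * z)))
    rw [norm_one, norm_neg, hn, sub_neg_eq_add] at this
    exact this
  · refine (norm_add_le _ _).trans ?_
    rw [norm_one, hn]

lemma hI_head_bound (μ : ℝ) {z : ℂ} (hz : 1 ≤ ‖z‖) {s : ℝ} (hs : 0 < s) (hle : s ≤ ‖z‖) :
    ‖hI μ z s‖ ≤ ((1 / 2) ^ μ + (3 / 2) ^ μ) * (s ^ μ * Real.exp (-1 * s)) := by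
  rw [hI_norm μ z hs]
  have hn : ‖(s : ℂ) / (2 * z)‖ = s / (2 * ‖z‖) := by
    rw [norm_div, norm_mul, Complex.norm_real, Real.norm_of_nonneg hs.le, Complex.norm_ofNat]
  have h2 : s / (2 * ‖z‖) ≤ 1 / 2 := by
    rw [div_le_iff₀ (by linarith)]; linarith
  have := rpow_between μ (a := 1 / 2) (x := ‖1 + (s : ℂ) / (2 * z)‖) (b := 3 / 2) (by norm_num)
    (by
      have := norm_sub_norm_le (1 : ℂ) (-((s : ℂ) / (2 * z)))
      rw [norm_one, norm_neg, hn, sub_neg_eq_add] at this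
      linarith)
    (by
      have := norm_add_le (1 : ℂ) ((s : ℂ) / (2 * z))
      rw [norm_one, hn] at this
      linarith)
  rw [neg_one_mul]
  calc _ ≤ Real.exp (-s) * s ^ μ * ((1 / 2) ^ μ + (3 / 2) ^ μ) := by gcongr
    _ = _ := by ring

lemma hH_tendsto {μ : ℝ} (hμ : -1 < μ) :
    Tendsto (hH μ) (comap norm atTop) (𝓝 ((Real.Gamma (μ + 1) : ℝ) : ℂ)) := by
  set l : Filter ℂ := comap norm atTop with hl
  have hnorm : Tendsto (fun z : ℂ => ‖z‖) l atTop := tendsto_comap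
  have ev1 : ∀ᶠ z in l, 1 ≤ ‖z‖ := hnorm.eventually_ge_atTop 1
  -- head
  set A : ℂ → ℂ := fun z => ∫ s in Ioi (0 : ℝ), (Iic ‖z‖).indicator (hI μ z) s with hA
  have gA : ((Real.Gamma (μ + 1) : ℝ) : ℂ) =
      ∫ s in Ioi (0 : ℝ), ((Real.exp (-s) * s ^ μ : ℝ) : ℂ) := by
    rw [integral_complex_ofReal, Real.Gamma_eq_integral (by linarith)]
    simp
  have tA : Tendsto A l (𝓝 ((Real.Gamma (μ + 1) : ℝ) : ℂ)) := by
    rw [gA]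
    apply tendsto_integral_filter_of_dominated_convergence
      (fun s => ((1 / 2) ^ μ + (3 / 2) ^ μ) * (s ^ μ * Real.exp (-1 * s)))
    · exact Eventually.of_forall fun z =>
        ((hI_meas μ z).indicator measurableSet_Iic).aestronglyMeasurable
    · filter_upwards [ev1] with z hz
      refine (ae_restrict_iff' measurableSet_Ioi).2 (Eventually.of_forall fun s hs => ?_)
      have hs : 0 < s := hs
      by_cases h : s ≤ ‖z‖
      · rw [indicator_of_mem (mem_Iic.2 h)]
        exact hI_head_bound μ hz hs h
      · rw [indicator_of_notMem (by simpa using h), norm_zero]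
        positivity
    · exact (gamma_int hμ one_pos).const_mul _
    · refine (ae_restrict_iff' measurableSet_Ioi).2 (Eventually.of_forall fun s hs => ?_)
      have t0 : Tendsto (fun z : ℂ => (s : ℂ) / (2 * z)) l (𝓝 0) := by
        rw [tendsto_zero_iff_norm_tendsto_zero]
        have : ∀ z : ℂ, ‖(s : ℂ) / (2 * z)‖ = ‖(s : ℂ)‖ / 2 * ‖z‖⁻¹ := by
          intro z
          rw [norm_div, norm_mul, Complex.norm_ofNat]
          ring
        simp_rw [this]
        simpa using (hnorm.inv_tendsto_atTop).const_mul (‖(s : ℂ)‖ / 2)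
      have t1 : Tendsto (fun z : ℂ => (1 + (s : ℂ) / (2 * z)) ^ (μ : ℂ)) l (𝓝 1) := by
        have c : ContinuousAt (fun w : ℂ => w ^ (μ : ℂ)) 1 :=
          continuousAt_id.cpow continuousAt_const (by simp)
        have t2 : Tendsto (fun z : ℂ => 1 + (s : ℂ) / (2 * z)) l (𝓝 1) := by
          simpa using t0.const_add 1
        have := c.tendsto.comp t2
        rw [Complex.one_cpow] at this
        exact this
      have t3 := t1.const_mul ((Real.exp (-s) * s ^ μ : ℝ) : ℂ)
      rw [mul_one] at t3
      refine t3.congr' ?_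
      filter_upwards [hnorm.eventually_ge_atTop s] with z hz
      rw [indicator_of_mem (mem_Iic.2 hz)]
      rfl
  -- tail
  set κ := ∫ t in Ioi (1 / 2 : ℝ), Real.exp (-t) * t ^ μ * kk μ t with hκ
  have tailae : ∀ z : ℂ, 1 ≤ ‖z‖ → ∀ᵐ s ∂(volume.restrict (Ioi ‖z‖)), 
      ‖hI μ z s‖ ≤ Real.exp (-s) * s ^ μ * kk μ (s / (2 * ‖z‖)) := by
    intro z hz
    rw [ae_restrict_iff' measurableSet_Ioi]
    have hne : ∀ᵐ t : ℝ, t ≠ 2 * ‖z‖ := by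
      rw [ae_iff]; simp
    filter_upwards [hne] with s h1 h2
    have h2 : ‖z‖ < s := h2
    exact hI_tail_bound μ hz (by linarith) h1
  have tB : Tendsto (fun z : ℂ => ∫ s in Ioi ‖z‖, hI μ z s) l (𝓝 0) := by
    apply squeeze_zero_norm' (a := fun z : ℂ => (2 * ‖z‖) * ((2 * ‖z‖) ^ μ *
      Real.exp (-(2 * ‖z‖ - 1) / 2) * κ))
    · filter_upwards [ev1] with z hz
      obtain ⟨h1, h2⟩ := tail_bound hμ hz
      exact (norm_integral_le_of_norm_le h1 (tailae z hz)).trans h2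
    · have t1 := tendsto_rpow_mul_exp_neg_mul_atTop_nhds_zero (μ + 1) (1 / 2) (by norm_num)
      have t2 : Tendsto (fun z : ℂ => 2 * ‖z‖) l atTop :=
        hnorm.const_mul_atTop (by norm_num)
      have t3 := (t1.comp t2).const_mul (Real.exp (1 / 2) * κ)
      rw [mul_zero] at t3
      refine t3.congr' ?_
      filter_upwards [ev1] with z hz
      simp only [Function.comp]
      rw [Real.rpow_add_one (by positivity), show -(2 * ‖z‖ - 1) / 2 = 1 / 2 + -(1 / 2) * (2 * ‖z‖) by ring,
        Real.exp_add]
      ring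
  have := tA.add tB
  rw [add_zero] at this
  refine this.congr' ?_
  filter_upwards [ev1] with z hz
  have hz0 : 0 ≤ ‖z‖ := by linarith
  have it : IntegrableOn (hI μ z) (Ioi ‖z‖) :=
    Integrable.mono' (tail_bound hμ hz).1 (hI_meas μ z).aestronglyMeasurable (tailae z hz)
  have ih : IntegrableOn (hI μ z) (Ioc 0 ‖z‖) := by
    refine Integrable.mono' (((gamma_int hμ one_pos).mono_set (Ioc_subset_Ioi_self)).const_mul
      ((1 / 2) ^ μ + (3 / 2) ^ μ)) (hI_meas μ z).aestronglyMeasurable ?_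
    refine (ae_restrict_iff' measurableSet_Ioc).2 (Eventually.of_forall fun s hs => ?_)
    exact hI_head_bound μ hz hs.1 hs.2
  unfold hH
  rw [← Ioc_union_Ioi_eq_Ioi hz0, setIntegral_union Ioc_disjoint_Ioi_same measurableSet_Ioi ih it]
  congr 1
  simp only [hA]
  rw [setIntegral_indicator measurableSet_Iic, Ioi_inter_Iic]

lemma hH_ne_zero {μ : ℝ} (hμ : -1 < μ) : ∃ R : ℝ, ∀ z : ℂ, R ≤ ‖z‖ → hH μ z ≠ 0 := by
  have h : ((Real.Gamma (μ + 1) : ℝ) : ℂ) ≠ 0 := by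
    exact_mod_cast (Real.Gamma_pos_of_pos (by linarith)).ne'
  have := (hH_tendsto hμ).eventually_ne h
  rw [eventually_comap] at this
  obtain ⟨R, hR⟩ := eventually_atTop.1 this
  exact ⟨R, fun z hz => hR _ hz z rfl⟩

end asym

section fin
open MeasureTheory Set Filter Topology

lemma macdonaldS_eq (a z : ℂ) : macdonaldS a z = hF a (z ^ 2 / 4) := rfl

lemma macdonaldK_neg (ν z : ℂ) : macdonaldK (-ν) z = macdonaldK ν z := by
  unfold macdonaldK
  rw [neg_mul, Complex.sin_neg, neg_neg, sub_neg_eq_add, ← sub_eq_add_neg, div_neg]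
  ring

lemma nonint_sin {ν : ℝ} (hν : ∀ n : ℤ, ν ≠ (n : ℝ)) : Real.sin (Real.pi * ν) ≠ 0 := by
  rw [Ne, Real.sin_eq_zero_iff]
  rintro ⟨n, hn⟩
  apply hν n
  have : Real.pi * (ν - n) = 0 := by linarith
  rcases mul_eq_zero.1 this with h | h
  · exact absurd h Real.pi_ne_zero
  · linarith

lemma macdonaldK_real {ν : ℝ} (hν : ∀ n : ℤ, ν ≠ (n : ℝ)) (h0 : 0 < ν) {x : ℝ} (hx : 0 < x) :
    macdonaldK (ν : ℂ) (x : ℂ) = ((1 / 2 * (x / 2) ^ ν * fI (-ν) (x ^ 2 / 4) : ℝ) : ℂ) := by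
  have hs := nonint_sin hν
  have hK : macdonaldK (ν : ℂ) (x : ℂ) = ((Real.pi / 2 / Real.sin (ν * Real.pi) *
      ((x / 2) ^ (-ν) / Real.Gamma (1 - ν) * hF (1 - ν) (x ^ 2 / 4) -
       (x / 2) ^ ν / Real.Gamma (1 + ν) * hF (1 + ν) (x ^ 2 / 4)) : ℝ) : ℂ) := by
    unfold macdonaldK
    rw [macdonaldS_eq, macdonaldS_eq]
    push_cast [hF_ofReal, Complex.ofReal_cpow (by positivity : (0 : ℝ) ≤ x / 2),
      ← Complex.Gamma_ofReal]
    rfl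
  rw [hK]
  congr 1
  rw [fI_eq_fR (nonint_neg hν) (by linarith) (by positivity)]
  unfold fR
  rw [neg_neg, sub_neg_eq_add, ← sub_eq_add_neg]
  have g1 := Real.Gamma_mul_Gamma_one_sub ν
  have g2 := Real.Gamma_mul_Gamma_one_sub (-ν)
  rw [sub_neg_eq_add, mul_neg, Real.sin_neg] at g2
  have n1 : Real.Gamma (1 - ν) ≠ 0 := by
    intro h
    rw [h, mul_zero] at g1
    exact (div_ne_zero Real.pi_ne_zero hs) g1.symm
  have n2 : Real.Gamma (1 + ν) ≠ 0 := (Real.Gamma_pos_of_pos (by linarith)).ne'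
  have e1 : Real.Gamma ν = Real.pi / Real.sin (Real.pi * ν) / Real.Gamma (1 - ν) := by
    rw [← g1]; field_simp
  have e2 : Real.Gamma (-ν) = Real.pi / -Real.sin (Real.pi * ν) / Real.Gamma (1 + ν) := by
    rw [← g2]; field_simp
  have e3 : (x ^ 2 / 4) ^ (-ν) = (x / 2) ^ (-ν) * (x / 2) ^ (-ν) := by
    rw [← Real.mul_rpow (by positivity) (by positivity)]
    congr 1; ring
  have e4 : (x / 2) ^ (-ν) * (x / 2) ^ ν = 1 := by
    rw [← Real.rpow_add (by positivity)]; simp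
  rw [e1, e2, e3, mul_comm ν Real.pi]
  linear_combination (-(1 / 2 * Real.pi / Real.sin (Real.pi * ν) / Real.Gamma (1 - ν) *
    (x / 2) ^ (-ν) * hF (1 - ν) (x ^ 2 / 4))) * e4

lemma macdonaldK_pos {ν : ℝ} (hν : ∀ n : ℤ, ν ≠ (n : ℝ)) (h0 : 0 < ν) :
    ∃ C : ℝ, C ≠ 0 ∧ ∀ x : ℝ, 0 < x → macdonaldK (ν : ℂ) (x : ℂ) =
      (C : ℂ) * (Complex.exp (-x) * (x : ℂ) ^ (((-(1 / 2) : ℝ)) : ℂ) * hH (ν - 1 / 2) x) := by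
  obtain ⟨c, hc, h⟩ := fI_eq_LT h0
  refine ⟨1 / 2 * (1 / 2) ^ ν * c * 2 ^ (ν - 1 / 2), by positivity, fun x hx => ?_⟩
  rw [macdonaldK_real hν h0 hx, h x hx]
  rw [← Complex.ofReal_cpow hx.le (-(1 / 2))]
  push_cast
  rw [hH_real _ hx]
  have e : (x / 2) ^ ν * (x ^ (-(ν - 1 / 2)) * x⁻¹) = (1 / 2) ^ ν * x ^ (-(1 / 2) : ℝ) := by
    rw [show x / 2 = (1 / 2) * x by ring, Real.mul_rpow (by norm_num) hx.le, mul_assoc,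
      ← Real.rpow_neg_one, ← Real.rpow_add hx, ← Real.rpow_add hx]
    congr 2; ring
  have e' : (((x / 2) ^ ν : ℝ) : ℂ) * (((x ^ (-(ν - 1 / 2)) : ℝ) : ℂ) * (x : ℂ)⁻¹)
      = (((1 / 2) ^ ν : ℝ) : ℂ) * ((x ^ (-(1 / 2) : ℝ) : ℝ) : ℂ) := by
    exact_mod_cast e
  have a1 : Complex.exp (-x) = ((Real.exp (-x) : ℝ) : ℂ) := by push_cast; rfl
  rw [a1]
  push_cast
  linear_combination (1 / 2 * c * Complex.exp (-x) * ((2 ^ (ν - 1 / 2) : ℝ) : ℂ) * hH (ν - 1 / 2) x) * e'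

lemma hFsq_diff {a : ℂ} (ha : ∀ n : ℕ, a + n ≠ 0) : Differentiable ℂ (macdonaldS a) := by
  have : macdonaldS a = (fun y => hF a y) ∘ (fun z => z ^ 2 / 4) := rfl
  rw [this]
  exact (hF_continuous ha).comp (by fun_prop)

lemma okc_sub {ν : ℝ} (hν : ∀ n : ℤ, ν ≠ (n : ℝ)) (n : ℕ) : (1 - (ν : ℂ)) + n ≠ 0 := by
  exact_mod_cast ok_sub hν n

lemma okc_add {ν : ℝ} (hν : ∀ n : ℤ, ν ≠ (n : ℝ)) (n : ℕ) : (1 + (ν : ℂ)) + n ≠ 0 := by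
  exact_mod_cast ok_add hν n

lemma half_slit {z : ℂ} (hz : z ∈ slitPlane) : z / 2 ∈ slitPlane := by
  rw [Complex.mem_slitPlane_iff] at hz ⊢
  have h1 : (z / 2).re = z.re / 2 := by simp
  have h2 : (z / 2).im = z.im / 2 := by simp
  rw [h1, h2]
  rcases hz with h | h
  · left; linarith
  · right; intro h'; apply h; linarith

lemma macdonaldK_diff {ν : ℝ} (hν : ∀ n : ℤ, ν ≠ (n : ℝ)) :
    DifferentiableOn ℂ (macdonaldK ν) slitPlane := by
  intro z hz
  apply DifferentiableAt.differentiableWithinAt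
  have d1 := (hFsq_diff (okc_sub hν)) z
  have d2 := (hFsq_diff (okc_add hν)) z
  have d0 : DifferentiableAt ℂ (fun z : ℂ => z / 2) z := by fun_prop
  have p : ∀ a : ℂ, DifferentiableAt ℂ (fun z : ℂ => (z / 2) ^ a) z := fun a =>
    d0.cpow (differentiableAt_const _) (half_slit hz)
  unfold macdonaldK
  exact ((((p _).div_const _).mul d1).sub (((p _).div_const _).mul d2)).const_mul _

lemma slit_preconn : IsPreconnected slitPlane := by
  have h : StarConvex ℝ 1 slitPlane := Complex.starConvex_one_slitPlane
  exact (StarConvex.isPathConnected h (by simp)).isConnected.isPreconnected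

lemma macdonaldK_slit {ν : ℝ} (hν : ∀ n : ℤ, ν ≠ (n : ℝ)) (h0 : 0 < ν) :
    ∃ C : ℝ, C ≠ 0 ∧ ∀ z ∈ slitPlane, macdonaldK (ν : ℂ) z =
      (C : ℂ) * (Complex.exp (-z) * z ^ (((-(1 / 2) : ℝ)) : ℂ) * hH (ν - 1 / 2) z) := by
  obtain ⟨C, hC, h⟩ := macdonaldK_pos hν h0
  refine ⟨C, hC, ?_⟩
  have a1 : AnalyticOnNhd ℂ (macdonaldK ν) slitPlane :=
    (macdonaldK_diff hν).analyticOnNhd Complex.isOpen_slitPlane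
  have a2 : AnalyticOnNhd ℂ (fun z => (C : ℂ) * (Complex.exp (-z) * z ^ (((-(1 / 2) : ℝ)) : ℂ) *
      hH (ν - 1 / 2) z)) slitPlane := by
    apply DifferentiableOn.analyticOnNhd _ Complex.isOpen_slitPlane
    intro z hz
    apply DifferentiableAt.differentiableWithinAt
    have e1 : DifferentiableAt ℂ (fun z : ℂ => Complex.exp (-z)) z := by fun_prop
    have e2 : DifferentiableAt ℂ (fun z : ℂ => z ^ (((-(1 / 2) : ℝ)) : ℂ)) z :=
      differentiableAt_id.cpow (differentiableAt_const _) hz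
    exact ((e1.mul e2).mul (hH_differentiableAt (by linarith) hz)).const_mul _
  refine a1.eqOn_of_preconnected_of_frequently_eq a2 slit_preconn (z₀ := 1) (by simp) ?_
  have t : Tendsto (fun n : ℕ => ((1 + 1 / ((n : ℝ) + 1) : ℝ) : ℂ)) atTop (𝓝[≠] 1) := by
    rw [tendsto_nhdsWithin_iff]
    constructor
    · have := (tendsto_one_div_add_atTop_nhds_zero_nat (𝕜 := ℝ)).const_add 1
      rw [add_zero] at this
      have := (Complex.continuous_ofReal.tendsto 1).comp this
      rw [Complex.ofReal_one] at this
      exact this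
    · refine Eventually.of_forall fun n => ?_
      have : (0 : ℝ) < 1 / ((n : ℝ) + 1) := by positivity
      simp only [mem_compl_iff, mem_singleton_iff]
      intro h
      have h' : (1 + 1 / ((n : ℝ) + 1) : ℝ) = 1 := by exact_mod_cast h
      linarith
  refine t.frequently (Eventually.frequently (Eventually.of_forall fun n => ?_))
  exact h _ (by positivity)

lemma macdonaldK_large {ν : ℝ} (hν : ∀ n : ℤ, ν ≠ (n : ℝ)) (h0 : 0 < ν) :
    ∃ R : ℝ, ∀ z ∈ slitPlane, R ≤ ‖z‖ → macdonaldK (ν : ℂ) z ≠ 0 := by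
  obtain ⟨C, hC, h⟩ := macdonaldK_slit hν h0
  obtain ⟨R, hR⟩ := hH_ne_zero (μ := ν - 1 / 2) (by linarith)
  refine ⟨R, fun z hz hn => ?_⟩
  rw [h z hz]
  refine mul_ne_zero (by exact_mod_cast hC) (mul_ne_zero (mul_ne_zero (Complex.exp_ne_zero _) ?_)
    (hR z hn))
  rw [Complex.cpow_def_of_ne_zero (Complex.slitPlane_ne_zero hz)]
  exact Complex.exp_ne_zero _

noncomputable def entE (ν w : ℂ) : ℂ :=
  Complex.exp (-ν * (w - Real.log 2)) / Complex.Gamma (1 - ν) * macdonaldS (1 - ν) (Complex.exp w) -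
  Complex.exp (ν * (w - Real.log 2)) / Complex.Gamma (1 + ν) * macdonaldS (1 + ν) (Complex.exp w)

lemma entE_diff {ν : ℝ} (hν : ∀ n : ℤ, ν ≠ (n : ℝ)) : Differentiable ℂ (entE ν) := by
  have d1 : Differentiable ℂ fun w => macdonaldS (1 - (ν : ℂ)) (Complex.exp w) :=
    (hFsq_diff (okc_sub hν)).comp Complex.differentiable_exp
  have d2 : Differentiable ℂ fun w => macdonaldS (1 + (ν : ℂ)) (Complex.exp w) :=
    (hFsq_diff (okc_add hν)).comp Complex.differentiable_exp
  have p : ∀ a : ℂ, Differentiable ℂ (fun w : ℂ => Complex.exp (a * (w - Real.log 2))) :=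
    fun a => by fun_prop
  unfold entE
  exact (((p _).div_const _).mul d1).sub (((p _).div_const _).mul d2)

lemma macdonaldK_entE (ν : ℂ) {z : ℂ} (hz : z ∈ slitPlane) : macdonaldK ν z =
    ((Real.pi : ℂ) / 2) / Complex.sin (ν * (Real.pi : ℂ)) * entE ν (Complex.log z) := by
  have hz0 := Complex.slitPlane_ne_zero hz
  have hl : Complex.log (z / 2) = Complex.log z - Real.log 2 := by
    have := Complex.log_ofReal_mul (r := 1 / 2) (by norm_num) hz0
    rw [show z / 2 = ((1 / 2 : ℝ) : ℂ) * z by push_cast; ring, this, one_div, Real.log_inv]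
    push_cast; ring
  have h2 : z / 2 ≠ 0 := Complex.slitPlane_ne_zero (half_slit hz)
  unfold macdonaldK entE
  rw [Complex.cpow_def_of_ne_zero h2, Complex.cpow_def_of_ne_zero h2, hl, Complex.exp_log hz0,
    mul_comm _ (-ν), mul_comm _ ν]

lemma entE_small {ν : ℝ} (hν : ∀ n : ℤ, ν ≠ (n : ℝ)) (h0 : 0 < ν) :
    ∃ M : ℝ, ∀ w : ℂ, w.re ≤ M → entE ν w ≠ 0 := by
  set l : Filter ℂ := comap Complex.re atBot with hl
  have hre : Tendsto Complex.re l atBot := tendsto_comap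
  have te : Tendsto Complex.exp l (𝓝 0) := by
    rw [tendsto_zero_iff_norm_tendsto_zero]
    simp_rw [Complex.norm_exp]
    exact Real.tendsto_exp_atBot.comp hre
  have hS : ∀ a : ℂ, (∀ n : ℕ, a + n ≠ 0) →
      Tendsto (fun w => macdonaldS a (Complex.exp w)) l (𝓝 1) := by
    intro a ha
    have := ((hFsq_diff ha).continuous.tendsto 0).comp te
    have e : macdonaldS a 0 = 1 := by
      rw [macdonaldS_eq]; simpa using hF_zero a
    rwa [e] at this
  have s1 := hS _ (okc_sub hν)
  have s2 := hS _ (okc_add hν)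
  have t2 : Tendsto (fun w : ℂ => Complex.exp (2 * ν * (w - Real.log 2))) l (𝓝 0) := by
    rw [tendsto_zero_iff_norm_tendsto_zero]
    have : ∀ w : ℂ, ‖Complex.exp (2 * ν * (w - Real.log 2))‖ =
        Real.exp (2 * ν * (w.re - Real.log 2)) := by
      intro w
      rw [Complex.norm_exp]
      congr 1
      rw [show (2 * (ν : ℂ) * (w - Real.log 2)) = ((2 * ν : ℝ) : ℂ) * (w - Real.log 2) by
        push_cast; rfl, Complex.re_ofReal_mul, Complex.sub_re, Complex.ofReal_re]
    simp_rw [this]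
    refine Real.tendsto_exp_atBot.comp ?_
    refine Tendsto.const_mul_atBot (by positivity) ?_
    exact tendsto_atBot_add_const_right _ _ hre
  have tot := (s1.const_mul (1 / Complex.Gamma (1 - ν))).sub
    ((t2.mul s2).const_mul (1 / Complex.Gamma (1 + ν)))
  rw [zero_mul, mul_zero, sub_zero, mul_one] at tot
  have hG : Complex.Gamma (1 - ν) ≠ 0 := by
    apply Complex.Gamma_ne_zero
    intro m h
    apply okc_sub hν m
    rw [h]; ring
  have ev := tot.eventually_ne (one_div_ne_zero hG)
  rw [eventually_comap] at ev
  obtain ⟨M, hM⟩ := eventually_atBot.1 ev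
  refine ⟨M, fun w hw h => hM _ hw w rfl ?_⟩
  have ex1 : Complex.exp (ν * (w - Real.log 2)) * Complex.exp (-ν * (w - Real.log 2)) = 1 := by
    rw [← Complex.exp_add]; simp
  have ex2 : Complex.exp (2 * ν * (w - Real.log 2)) =
      Complex.exp (ν * (w - Real.log 2)) * Complex.exp (ν * (w - Real.log 2)) := by
    rw [← Complex.exp_add]; congr 1; ring
  have : Complex.exp (ν * (w - Real.log 2)) * entE ν w = 0 := by rw [h, mul_zero]
  rw [← this, ex2]
  unfold entE
  linear_combination (-(1 / Complex.Gamma (1 - ν) * macdonaldS (1 - ν) (Complex.exp w))) * ex1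

lemma zeros_finite_pos {ν : ℝ} (hν : ∀ n : ℤ, ν ≠ (n : ℝ)) (h0 : 0 < ν) :
    {z : ℂ | z ∈ Complex.slitPlane ∧ macdonaldK (ν : ℂ) z = 0}.Finite := by
  obtain ⟨R, hR⟩ := macdonaldK_large hν h0
  obtain ⟨M, hM⟩ := entE_small hν h0
  have hc : ((Real.pi : ℂ) / 2) / Complex.sin ((ν : ℂ) * (Real.pi : ℂ)) ≠ 0 := by
    have hs := nonint_sin hν
    apply div_ne_zero
    · simp [Real.pi_ne_zero]
    · rw [mul_comm]; exact_mod_cast hs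
  set Z := {z : ℂ | z ∈ Complex.slitPlane ∧ macdonaldK (ν : ℂ) z = 0} with hZ
  have hinj : InjOn Complex.log Z := by
    intro a ha b hb hab
    rw [← Complex.exp_log (Complex.slitPlane_ne_zero ha.1), hab,
      Complex.exp_log (Complex.slitPlane_ne_zero hb.1)]
  by_contra hinf
  have hinf' : (Complex.log '' Z).Infinite := (infinite_image_iff hinj).2 hinf
  have hE : ∀ w ∈ Complex.log '' Z, entE ν w = 0 := by
    rintro _ ⟨z, hz, rfl⟩
    have := hz.2
    rw [macdonaldK_entE _ hz.1] at this
    exact (mul_eq_zero.1 this).resolve_left hc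
  have hsub : Complex.log '' Z ⊆ Icc M (Real.log R) ×ℂ Icc (-Real.pi) Real.pi := by
    rintro w ⟨z, hz, rfl⟩
    rw [Complex.mem_reProdIm]
    refine ⟨⟨?_, ?_⟩, (Complex.neg_pi_lt_log_im z).le, Complex.log_im_le_pi z⟩
    · by_contra h
      exact hM _ (not_le.1 h).le (hE _ ⟨z, hz, rfl⟩)
    · rw [Complex.log_re]
      apply Real.log_le_log (norm_pos_iff.2 (Complex.slitPlane_ne_zero hz.1))
      by_contra h
      exact hR z hz.1 (not_le.1 h).le hz.2
  have hcomp : IsCompact (Icc M (Real.log R) ×ℂ Icc (-Real.pi) Real.pi) :=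
    isCompact_Icc.reProdIm isCompact_Icc
  obtain ⟨w₀, -, hw₀⟩ := hinf'.exists_accPt_of_subset_isCompact hcomp hsub
  have hfr : ∃ᶠ w in 𝓝[≠] w₀, entE ν w = 0 :=
    (accPt_iff_frequently_nhdsNE.1 hw₀).mono hE
  have an : AnalyticOnNhd ℂ (entE ν) univ := fun w _ => (entE_diff hν).analyticAt w
  have := an.eqOn_zero_of_preconnected_of_frequently_eq_zero isPreconnected_univ (mem_univ w₀) hfr
  exact hM (M : ℂ) (by simp) (this (mem_univ _))

end fin

/-- For real non-integer order, the Macdonald function has only finitely many zeros in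
the principal Riemann sheet. -/
theorem macdonaldK_real_order_zeros_finite (ν : ℝ) (hν : ∀ n : ℤ, ν ≠ (n : ℝ)) :
    {z : ℂ | z ∈ Complex.slitPlane ∧ macdonaldK (ν : ℂ) z = 0}.Finite := by
  rcases lt_trichotomy ν 0 with h | h | h
  · have := zeros_finite_pos (nonint_neg hν) (by linarith : 0 < -ν)
    simpa only [Complex.ofReal_neg, macdonaldK_neg] using this
  · exact absurd (by simpa using h) (hν 0)
  · exact zeros_finite_pos hν h
end

section
/- Let t ∈ ℝ with t ≠ 0 and let z ∈ ℂ with z ∉ (−∞, 0]. If K_{it}(z) = 0, then z is a positive real number; that is, for purely imaginary order all zeros of the Macdonald function in the principal Riemann sheet lie on the positive real semiaxis. -/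
open Complex Asymptotics

open Filter Topology
namespace MacK

lemma hre {f : ℝ → ℂ} {d : ℂ} {x : ℝ} (h : HasDerivAt f d x) :
    HasDerivAt (fun y => (f y).re) d.re x :=
  (Complex.reCLM.hasFDerivAt.comp_hasDerivAt x h)

lemma him {f : ℝ → ℂ} {d : ℂ} {x : ℝ} (h : HasDerivAt f d x) :
    HasDerivAt (fun y => (f y).im) d.im x :=
  (Complex.imCLM.hasFDerivAt.comp_hasDerivAt x h)

/-- `f` solves the Bessel equation in logarithmic form, with derivative `g`. -/
def Sol (t : ℝ) (q : ℂ) (f g : ℝ → ℂ) : Prop :=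
  (∀ x, HasDerivAt f (g x) x) ∧
  (∀ x, HasDerivAt g ((q * (Real.exp (2 * x) : ℝ) - (t : ℂ) ^ 2) * f x) x)

lemma Sol.sub {t : ℝ} {q : ℂ} {f g f₂ g₂ : ℝ → ℂ} (h : Sol t q f g) (h₂ : Sol t q f₂ g₂) :
    Sol t q (fun x => f x - f₂ x) (fun x => g x - g₂ x) :=
  ⟨fun x => (h.1 x).sub (h₂.1 x), fun x => by
    convert! (h.2 x).sub (h₂.2 x) using 1; ring⟩

lemma Sol.lin {t : ℝ} {q : ℂ} {f g f₂ g₂ : ℝ → ℂ} (h : Sol t q f g) (h₂ : Sol t q f₂ g₂)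
    (a b : ℂ) :
    Sol t q (fun x => a * f x + b * f₂ x) (fun x => a * g x + b * g₂ x) :=
  ⟨fun x => ((h.1 x).const_mul a).add ((h₂.1 x).const_mul b), fun x => by
    convert! ((h.2 x).const_mul a).add ((h₂.2 x).const_mul b) using 1; ring⟩

def En (t : ℝ) (f g : ℝ → ℂ) (x : ℝ) : ℝ :=
  t ^ 2 * ((f x).re * (f x).re + (f x).im * (f x).im) +
    ((g x).re * (g x).re + (g x).im * (g x).im)

lemma En_nonneg (t : ℝ) (f g : ℝ → ℂ) (x : ℝ) : 0 ≤ En t f g x := by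
  unfold En; nlinarith [mul_nonneg (sq_nonneg t) (mul_self_nonneg (f x).re),
    mul_nonneg (sq_nonneg t) (mul_self_nonneg (f x).im), mul_self_nonneg (g x).re,
    mul_self_nonneg (g x).im]

lemma Sol.en_deriv {t : ℝ} {q : ℂ} {f g : ℝ → ℂ} (h : Sol t q f g) (x : ℝ) :
    HasDerivAt (En t f g)
      (2 * Real.exp (2 * x) * (q * f x * (starRingEnd ℂ) (g x)).re) x := by
  have h1 := hre (h.1 x)
  have h2 := him (h.1 x)
  have h3 := hre (h.2 x)
  have h4 := him (h.2 x)
  have := (((h1.mul h1).add (h2.mul h2)).const_mul (t ^ 2)).add ((h3.mul h3).add (h4.mul h4))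
  convert! this using 1
  simp [Complex.mul_re, Complex.mul_im, pow_two, -Complex.ofReal_exp]
  ring

lemma Sol.en_bound {t : ℝ} (ht : t ≠ 0) {q : ℂ} {f g : ℝ → ℂ} (x : ℝ) :
    |2 * Real.exp (2 * x) * (q * f x * (starRingEnd ℂ) (g x)).re| ≤
      (‖q‖ / |t|) * Real.exp (2 * x) * En t f g x := by
  have e := Real.exp_pos (2 * x)
  have h1 : |(q * f x * (starRingEnd ℂ) (g x)).re| ≤ ‖q‖ * (‖f x‖ * ‖g x‖) := by
    refine (Complex.abs_re_le_norm _).trans ?_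
    simp [mul_assoc]
  have hE : En t f g x = (|t| * ‖f x‖) ^ 2 + ‖g x‖ ^ 2 := by
    rw [mul_pow, sq_abs, ← Complex.normSq_eq_norm_sq, ← Complex.normSq_eq_norm_sq,
      Complex.normSq_apply, Complex.normSq_apply]; rfl
  have ht' : 0 < |t| := abs_pos.mpr ht
  rw [abs_mul, abs_of_pos (by positivity : 0 < 2 * Real.exp (2 * x)), hE]
  calc _ ≤ 2 * Real.exp (2 * x) * (‖q‖ * (‖f x‖ * ‖g x‖)) := by gcongr
    _ = ‖q‖ / |t| * Real.exp (2 * x) * (2 * (|t| * ‖f x‖) * ‖g x‖) := by field_simp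
    _ ≤ _ := by
      gcongr
      nlinarith [sq_nonneg (|t| * ‖f x‖ - ‖g x‖)]

lemma exp_aux (C x : ℝ) : HasDerivAt (fun x => Real.exp (C / 2 * Real.exp (2 * x)))
    (Real.exp (C / 2 * Real.exp (2 * x)) * (C * Real.exp (2 * x))) x := by
  have h : HasDerivAt (fun x : ℝ => C / 2 * Real.exp (2 * x)) (C * Real.exp (2 * x)) x := by
    convert! (((hasDerivAt_id x).const_mul 2).exp.const_mul (C/2)) using 1
    simp; ring
  exact h.exp

/-- Forward Gronwall from `-∞`. -/
lemma Sol.eq_zero {t : ℝ} (ht : t ≠ 0) {q : ℂ} {f g : ℝ → ℂ} (h : Sol t q f g)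
    (hf : Tendsto f atBot (𝓝 0)) (hg : Tendsto g atBot (𝓝 0)) : ∀ x, f x = 0 ∧ g x = 0 := by
  set C := ‖q‖ / |t| with hC
  have hd : ∀ x, HasDerivAt (fun x => En t f g x * Real.exp (-C / 2 * Real.exp (2 * x)))
      _ x := fun x => (h.en_deriv x).mul (exp_aux (-C) x)
  have hanti : Antitone (fun x => En t f g x * Real.exp (-C / 2 * Real.exp (2 * x))) := by
    refine antitone_of_hasDerivAt_nonpos hd fun x => ?_
    have := (abs_le.mp (Sol.en_bound ht (q := q) (f := f) (g := g) x)).2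
    have e := Real.exp_pos (-C / 2 * Real.exp (2 * x))
    rw [← hC] at this
    simp only [Pi.zero_apply]
    nlinarith
  have hEn : Tendsto (En t f g) atBot (𝓝 0) := by
    have a1 := (Complex.continuous_re.tendsto _).comp hf
    have a2 := (Complex.continuous_im.tendsto _).comp hf
    have a3 := (Complex.continuous_re.tendsto _).comp hg
    have a4 := (Complex.continuous_im.tendsto _).comp hg
    have := (((a1.mul a1).add (a2.mul a2)).const_mul (t ^ 2)).add ((a3.mul a3).add (a4.mul a4))
    simp only [Complex.zero_re, Complex.zero_im, mul_zero, add_zero] at this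
    exact this
  have hlim : Tendsto (fun x => En t f g x * Real.exp (-C / 2 * Real.exp (2 * x))) atBot (𝓝 0) := by
    have h2 : Tendsto (fun x : ℝ => Real.exp (2 * x)) atBot (𝓝 0) :=
      Real.tendsto_exp_atBot.comp (tendsto_id.const_mul_atBot (by norm_num))
    have h3 := (Real.continuous_exp.tendsto _).comp (h2.const_mul (-C / 2))
    simpa using hEn.mul h3
  intro x
  have hle : En t f g x * Real.exp (-C / 2 * Real.exp (2 * x)) ≤ 0 :=
    ge_of_tendsto hlim (by
      filter_upwards [eventually_le_atBot x] with y hy using hanti hy)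
  have e := Real.exp_pos (-C / 2 * Real.exp (2 * x))
  have h0 : En t f g x ≤ 0 := by
    by_contra hh; push Not at hh; nlinarith [mul_pos hh e]
  unfold En at h0
  have ht2 : 0 < t ^ 2 := by positivity
  have n1 := mul_self_nonneg (f x).re
  have n2 := mul_self_nonneg (f x).im
  have n3 := mul_self_nonneg (g x).re
  have n4 := mul_self_nonneg (g x).im
  have n5 := mul_nonneg ht2.le (add_nonneg n1 n2)
  have m : (f x).re * (f x).re + (f x).im * (f x).im = 0 := by
    have : t^2 * ((f x).re * (f x).re + (f x).im * (f x).im) = 0 := by linarith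
    rcases mul_eq_zero.mp this with h | h
    · exact absurd h ht2.ne'
    · exact h
  constructor
  · apply Complex.ext
    · exact mul_self_eq_zero.mp (by simp; nlinarith)
    · exact mul_self_eq_zero.mp (by simp; nlinarith)
  · apply Complex.ext
    · exact mul_self_eq_zero.mp (by simp; nlinarith)
    · exact mul_self_eq_zero.mp (by simp; nlinarith)

/-- Backward uniqueness. -/
lemma Sol.back {t : ℝ} (ht : t ≠ 0) {q : ℂ} {f g : ℝ → ℂ} (h : Sol t q f g) {x₁ : ℝ}
    (h1 : f x₁ = 0) (h2 : g x₁ = 0) : ∀ x ≤ x₁, g x = 0 := by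
  set C := ‖q‖ / |t| with hC
  have hd : ∀ x, HasDerivAt (fun x => En t f g x * Real.exp (C / 2 * Real.exp (2 * x)))
      _ x := fun x => (h.en_deriv x).mul (exp_aux C x)
  have hmono : Monotone (fun x => En t f g x * Real.exp (C / 2 * Real.exp (2 * x))) := by
    refine monotone_of_hasDerivAt_nonneg hd fun x => ?_
    have := (abs_le.mp (Sol.en_bound ht (q := q) (f := f) (g := g) x)).1
    have e := Real.exp_pos (C / 2 * Real.exp (2 * x))
    rw [← hC] at this
    simp only [Pi.zero_apply]
    nlinarith
  intro x hx
  have hle := hmono hx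
  have e := Real.exp_pos (C / 2 * Real.exp (2 * x))
  have hz : En t f g x₁ = 0 := by simp [En, h1, h2]
  simp only [hz, zero_mul] at hle
  have h0 : En t f g x ≤ 0 := by
    by_contra hh; push Not at hh; nlinarith [mul_pos hh e]
  unfold En at h0
  have n1 := mul_self_nonneg (f x).re
  have n2 := mul_self_nonneg (f x).im
  have n3 := mul_self_nonneg (g x).re
  have n4 := mul_self_nonneg (g x).im
  have n5 := mul_nonneg (sq_nonneg t) (add_nonneg n1 n2)
  apply Complex.ext
  · exact mul_self_eq_zero.mp (by simp; nlinarith)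
  · exact mul_self_eq_zero.mp (by simp; nlinarith)

/-- The imaginary part of the derivative times the conjugate. -/
def Wr (f g : ℝ → ℂ) (x : ℝ) : ℝ := (g x).im * (f x).re - (g x).re * (f x).im

lemma Sol.wr_deriv {t : ℝ} {q : ℂ} {f g : ℝ → ℂ} (h : Sol t q f g) (x : ℝ) :
    HasDerivAt (Wr f g)
      (q.im * (Real.exp (2 * x) * ((f x).re * (f x).re + (f x).im * (f x).im))) x := by
  have h1 := hre (h.1 x)
  have h2 := him (h.1 x)
  have h3 := hre (h.2 x)
  have h4 := him (h.2 x)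
  convert! (h4.mul h1).sub (h3.mul h2) using 1
  simp [Complex.mul_re, Complex.mul_im, pow_two, -Complex.ofReal_exp]
  ring

/-- Abstract non-vanishing, left half plane. -/
lemma no_zero_left {t : ℝ} {z : ℂ} {f g : ℝ → ℂ} (h : Sol t (z ^ 2) f g)
    {L : ℝ} (hL : Tendsto (Wr f g) atBot (𝓝 L)) (hLz : z.im * L < 0) (hre : z.re ≤ 0)
    (h0 : f 0 = 0) : False := by
  have hd := fun x => (h.wr_deriv x).const_mul z.im
  have hanti : Antitone (fun x => z.im * Wr f g x) := by
    refine antitone_of_hasDerivAt_nonpos hd fun x => ?_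
    have e := Real.exp_pos (2 * x)
    have n1 := mul_self_nonneg (f x).re
    have n2 := mul_self_nonneg (f x).im
    have : (z ^ 2).im = 2 * z.re * z.im := by simp [pow_two]; ring
    rw [this]
    have p : 0 ≤ Real.exp (2 * x) * ((f x).re * (f x).re + (f x).im * (f x).im) := by positivity
    have : z.im * (2 * z.re * z.im * (Real.exp (2 * x) * ((f x).re * (f x).re + (f x).im * (f x).im))) = z.re * (2 * (z.im * z.im) * (Real.exp (2 * x) * ((f x).re * (f x).re + (f x).im * (f x).im))) := by ring
    rw [this]
    exact mul_nonpos_of_nonpos_of_nonneg hre (mul_nonneg (by nlinarith [mul_self_nonneg z.im]) p)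
  have := ge_of_tendsto (hL.const_mul z.im) (b := z.im * Wr f g 0) (by
      filter_upwards [eventually_le_atBot (0:ℝ)] with y hy using hanti hy)
  simp [Wr, h0] at this
  linarith

lemma no_zero_right {t : ℝ} (ht : t ≠ 0) {z : ℂ} {f g : ℝ → ℂ} (h : Sol t (z ^ 2) f g)
    {L : ℝ} (hL : Tendsto (Wr f g) atBot (𝓝 L)) (hLz : z.im * L < 0) (hre : 0 < z.re)
    (hT : Tendsto (Wr f g) atTop (𝓝 0))
    (h0 : f 0 = 0) : False := by
  have hd := fun x => (h.wr_deriv x).const_mul z.im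
  have him0 : z.im ≠ 0 := by rintro h; simp [h] at hLz
  have him2 : (z ^ 2).im = 2 * z.re * z.im := by simp [pow_two]; ring
  have hmono : Monotone (fun x => z.im * Wr f g x) := by
    refine monotone_of_hasDerivAt_nonneg hd fun x => ?_
    have e := Real.exp_pos (2 * x)
    have n1 := mul_self_nonneg (f x).re
    have n2 := mul_self_nonneg (f x).im
    rw [him2]
    have p : 0 ≤ Real.exp (2 * x) * ((f x).re * (f x).re + (f x).im * (f x).im) := by positivity
    have : z.im * (2 * z.re * z.im * (Real.exp (2 * x) * ((f x).re * (f x).re + (f x).im * (f x).im))) = z.re * (2 * (z.im * z.im) * (Real.exp (2 * x) * ((f x).re * (f x).re + (f x).im * (f x).im))) := by ring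
    rw [this]
    exact mul_nonneg hre.le (mul_nonneg (by nlinarith [mul_self_nonneg z.im]) p)
  have hW0 : Wr f g 0 = 0 := by simp [Wr, h0]
  have hW : ∀ x, 0 ≤ x → Wr f g x = 0 := by
    intro x hx
    have h1 : z.im * Wr f g 0 ≤ z.im * Wr f g x := hmono hx
    have h3 : z.im * Wr f g x ≤ z.im * 0 := by
      refine ge_of_tendsto (hT.const_mul z.im) ?_
      filter_upwards [eventually_ge_atTop x] with y hy using hmono hy
    rw [hW0] at h1
    have : z.im * Wr f g x = 0 := by linarith
    exact (mul_eq_zero.mp this).resolve_left him0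
  have hf : ∀ x, 0 < x → f x = 0 := by
    intro x hx
    have e1 : Wr f g =ᶠ[𝓝 x] fun _ => 0 := by
      filter_upwards [lt_mem_nhds hx] with y hy using hW y hy.le
    have := (h.wr_deriv x).unique ((hasDerivAt_const x (0:ℝ)).congr_of_eventuallyEq e1)
    rw [him2] at this
    have e := Real.exp_pos (2 * x)
    have k : (f x).re * (f x).re + (f x).im * (f x).im = 0 := by
      have h2 : 2 * z.re * z.im ≠ 0 := by positivity
      have := (mul_eq_zero.mp this).resolve_left h2
      exact (mul_eq_zero.mp this).resolve_left e.ne'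
    have n1 := mul_self_nonneg (f x).re
    have n2 := mul_self_nonneg (f x).im
    apply Complex.ext
    · exact mul_self_eq_zero.mp (by simp; nlinarith)
    · exact mul_self_eq_zero.mp (by simp; nlinarith)
  have hg1 : g 1 = 0 := by
    have e1 : f =ᶠ[𝓝 1] fun _ => 0 := by
      filter_upwards [lt_mem_nhds one_pos] with y hy using hf y hy
    exact (h.1 1).unique ((hasDerivAt_const (1:ℝ) (0:ℂ)).congr_of_eventuallyEq e1)
  have hb := h.back ht (hf 1 one_pos) hg1
  have : Tendsto (Wr f g) atBot (𝓝 0) := by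
    refine tendsto_const_nhds.congr' ?_
    filter_upwards [eventually_le_atBot (1:ℝ)] with y hy
    simp [Wr, hb y hy]
  have := tendsto_nhds_unique hL this
  simp [this] at hLz

/-- The series in the variable `w = z^2/4`. -/
noncomputable def phi (a w : ℂ) : ℂ :=
  ∑' k : ℕ, w ^ k / ((k.factorial : ℂ) * (ascPochhammer ℂ k).eval a)

lemma poch_ge {a : ℂ} (ha : 1 ≤ a.re) (k : ℕ) : 1 ≤ ‖(ascPochhammer ℂ k).eval a‖ := by
  induction k with
  | zero => simp
  | succ k ih =>
    rw [ascPochhammer_succ_eval, norm_mul]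
    have : 1 ≤ ‖a + k‖ := by
      refine le_trans ?_ (Complex.re_le_norm _)
      simp; have : (0:ℝ) ≤ k := Nat.cast_nonneg k
      linarith
    nlinarith

lemma poch_ne {a : ℂ} (ha : 1 ≤ a.re) (k : ℕ) : (ascPochhammer ℂ k).eval a ≠ 0 := by
  intro h; have := poch_ge ha k; rw [h] at this; simp at this; linarith

lemma poch_left (a : ℂ) (k : ℕ) : (ascPochhammer ℂ (k+1)).eval a =
    a * (ascPochhammer ℂ k).eval (a + 1) := by
  rw [ascPochhammer_succ_left]; simp

lemma phi_term_le {a : ℂ} (ha : 1 ≤ a.re) (w : ℂ) (k : ℕ) :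
    ‖w ^ k / ((k.factorial : ℂ) * (ascPochhammer ℂ k).eval a)‖ ≤ ‖w‖ ^ k / k.factorial := by
  rw [norm_div, norm_pow, norm_mul, Complex.norm_natCast]
  have := poch_ge ha k
  have h2 : (0:ℝ) < k.factorial := by positivity
  gcongr
  nlinarith

lemma phi_summable {a : ℂ} (ha : 1 ≤ a.re) (w : ℂ) :
    Summable fun k : ℕ => w ^ k / ((k.factorial : ℂ) * (ascPochhammer ℂ k).eval a) :=
  Summable.of_norm_bounded (Real.summable_pow_div_factorial ‖w‖) (phi_term_le ha w)

lemma phi_zero (a : ℂ) : phi a 0 = 1 := by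
  unfold phi
  rw [tsum_eq_single 0]
  · simp
  · intro b hb; simp [hb]

lemma phi_deriv {a : ℂ} (ha : 1 ≤ a.re) (w : ℂ) :
    HasDerivAt (phi a) (phi (a + 1) w / a) w := by
  have ha0 : a ≠ 0 := by rintro rfl; simp at ha; linarith
  set R := ‖w‖ + 1
  have hR : 0 < R := by positivity
  set u : ℕ → ℝ := fun n => n * R ^ (n - 1) / n.factorial
  have hfac : ∀ n : ℕ, ((n + 1 : ℕ) : ℝ) * R ^ n / ((n+1).factorial : ℝ) = R ^ n / n.factorial := by
    intro n; rw [Nat.factorial_succ]; push_cast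
    have : (n.factorial : ℝ) ≠ 0 := by positivity
    field_simp
  have hu : Summable u := by
    rw [← summable_nat_add_iff 1]
    refine (Real.summable_pow_div_factorial R).congr fun n => ?_
    simpa [u] using (hfac n).symm
  have key := hasDerivAt_tsum_of_isPreconnected
    (g := fun (k : ℕ) (y : ℂ) => y ^ k / ((k.factorial : ℂ) * (ascPochhammer ℂ k).eval a))
    (g' := fun (k : ℕ) (y : ℂ) => (k * y ^ (k - 1)) / ((k.factorial : ℂ) * (ascPochhammer ℂ k).eval a))
    (t := Metric.ball (0:ℂ) R) (y₀ := 0) (y := w) hu Metric.isOpen_ball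
    (convex_ball (0:ℂ) R).isPreconnected
    (fun n y _ => (hasDerivAt_pow n y).div_const _)
    (fun n y hy => by
      have hy' : ‖y‖ ≤ R := by simpa using (Metric.mem_ball.mp hy).le
      rw [norm_div, norm_mul, norm_mul, norm_pow, Complex.norm_natCast, Complex.norm_natCast]
      have := poch_ge ha n
      have h2 : (0:ℝ) < n.factorial := by positivity
      simp only [u]
      gcongr
      nlinarith)
    (by simpa using hR) (phi_summable ha 0) (by simp [R])
  convert! key using 1
  have hs : Summable fun k : ℕ => (k * w ^ (k - 1)) / ((k.factorial : ℂ) * (ascPochhammer ℂ k).eval a) := by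
    refine Summable.of_norm_bounded hu fun n => ?_
    rw [norm_div, norm_mul, norm_mul, norm_pow, Complex.norm_natCast, Complex.norm_natCast]
    have := poch_ge ha n
    have h2 : (0:ℝ) < n.factorial := by positivity
    have : ‖w‖ ≤ R := by simp [R]
    simp only [u]
    gcongr
    nlinarith
  rw [hs.tsum_eq_zero_add]
  simp only [Nat.cast_zero, zero_mul, zero_div, zero_add]
  rw [phi, ← tsum_div_const]
  refine tsum_congr fun k => ?_
  rw [poch_left, Nat.factorial_succ]
  have h1 : (k.factorial : ℂ) ≠ 0 := by exact_mod_cast k.factorial_ne_zero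
  have h3 : ((k:ℂ) + 1) ≠ 0 := by exact_mod_cast k.succ_ne_zero
  have h2 := poch_ne (a := a + 1) (by simp; linarith) k
  simp only [Nat.add_sub_cancel]; push_cast
  field_simp

lemma phi_rec {a : ℂ} (ha : 1 ≤ a.re) (w : ℂ) :
    phi a w = phi (a + 1) w + w / (a * (a + 1)) * phi (a + 2) w := by
  have ha0 : a ≠ 0 := by rintro rfl; simp at ha; linarith
  have ha1 : a + 1 ≠ 0 := by intro h; have := congrArg Complex.re h; simp at this; linarith
  have s0 := phi_summable ha w
  have s1 := phi_summable (a := a + 1) (by simp; linarith) w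
  unfold phi
  rw [s0.tsum_eq_zero_add, s1.tsum_eq_zero_add, ← tsum_mul_left, add_assoc,
    ← Summable.tsum_add ((summable_nat_add_iff 1).mpr s1)
      ((phi_summable (a := a + 2) (by simp; linarith) w).mul_left _)]
  congr 1
  · simp
  refine tsum_congr fun k => ?_
  have h1 : (k.factorial : ℂ) ≠ 0 := by exact_mod_cast k.factorial_ne_zero
  have h3 : ((k:ℂ) + 1) ≠ 0 := by exact_mod_cast k.succ_ne_zero
  have h2 := poch_ne (a := a + 1) (by simp; linarith) k
  have h4 := poch_ne (a := a + 2) (by simp; linarith) k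
  have h5 : a + 1 + k ≠ 0 := by
    intro h; have := congrArg Complex.re h; simp at this
    have : (0:ℝ) ≤ k := Nat.cast_nonneg k
    linarith
  have e1 : (ascPochhammer ℂ (k+1)).eval (a + 1) = (ascPochhammer ℂ k).eval (a+1) * (a + 1 + k) := ascPochhammer_succ_eval _ _
  have e2 := poch_left (a + 1) k
  have e3 : (ascPochhammer ℂ k).eval (a + 2) = (ascPochhammer ℂ k).eval (a+1) * (a + 1 + k) / (a + 1) := by
    rw [eq_div_iff ha1, ← e1, e2]; ring_nf
  rw [poch_left a, e1, e3, Nat.factorial_succ]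
  push_cast
  field_simp
  ring

noncomputable def Fs (ν w₀ : ℂ) (x : ℝ) : ℂ := cexp (ν * x) * phi (1 + ν) (w₀ * cexp (2 * x))

noncomputable def Gs (ν w₀ : ℂ) (x : ℝ) : ℂ := cexp (ν * x) *
  (ν * phi (1 + ν) (w₀ * cexp (2 * x)) +
    2 * (w₀ * cexp (2 * x)) * (phi (1 + ν + 1) (w₀ * cexp (2 * x)) / (1 + ν)))

lemma cexp_lin_deriv (ν : ℂ) (x : ℝ) :
    HasDerivAt (fun x : ℝ => cexp (ν * x)) (cexp (ν * x) * ν) x := by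
  have h : HasDerivAt (fun x : ℝ => ν * (x:ℂ)) ν x := by
    simpa using (Complex.ofRealCLM.hasDerivAt (x := x)).const_mul ν
  exact h.cexp

lemma sol_series {t : ℝ} {ν z : ℂ} (hν : ν.re = 0) (hν2 : ν ^ 2 = -(t : ℂ) ^ 2) :
    Sol t (z ^ 2) (Fs ν (z ^ 2 / 4)) (Gs ν (z ^ 2 / 4)) := by
  have r1 : 1 ≤ (1 + ν).re := by simp [hν]
  have r2 : 1 ≤ (1 + ν + 1).re := by simp [hν]
  have n1 : 1 + ν ≠ 0 := by intro h; simp [h] at r1; linarith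
  have n2 : 1 + ν + 1 ≠ 0 := by intro h; simp [h] at r2; linarith
  set w₀ := z ^ 2 / 4 with hw₀
  have hw : ∀ x : ℝ, HasDerivAt (fun x : ℝ => w₀ * cexp (2 * x)) (w₀ * (cexp (2 * x) * 2)) x :=
    fun x => (cexp_lin_deriv 2 x).const_mul w₀
  have hp : ∀ (a : ℂ), 1 ≤ a.re → ∀ x : ℝ, HasDerivAt (fun x : ℝ => phi a (w₀ * cexp (2 * x)))
      (phi (a + 1) (w₀ * cexp (2 * x)) / a * (w₀ * (cexp (2 * x) * 2))) x :=
    fun a ha x => (phi_deriv ha _).comp x (hw x)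
  constructor
  · intro x
    convert! (cexp_lin_deriv ν x).mul (hp _ r1 x) using 1
    unfold Gs
    ring
  · intro x
    convert! (cexp_lin_deriv ν x).mul (((hp _ r1 x).const_mul ν).add
      (((hw x).const_mul 2).mul ((hp _ r2 x).div_const (1 + ν)))) using 1
    unfold Fs
    have rr := phi_rec r1 (w₀ * cexp (2 * x))
    have e3 : 1 + ν + 1 + 1 = 1 + ν + 2 := by ring
    have hz : z ^ 2 = 4 * w₀ := by rw [hw₀]; ring
    rw [e3, hz]
    push_cast
    have : (t:ℂ)^2 = - ν ^ 2 := by rw [hν2]; ring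
    rw [this]
    simp only [Pi.add_apply, Pi.mul_apply]
    rw [rr]
    field_simp
    ring

lemma tendsto_w (w₀ : ℂ) : Tendsto (fun x : ℝ => w₀ * cexp (2 * x)) atBot (𝓝 0) := by
  have h2 : Tendsto (fun x : ℝ => Real.exp (2 * x)) atBot (𝓝 0) :=
    Real.tendsto_exp_atBot.comp (tendsto_id.const_mul_atBot (by norm_num))
  have h3 := ((Complex.continuous_ofReal.tendsto _).comp h2).const_mul w₀
  simpa [Function.comp_def] using h3

lemma norm_cexp_im {ν : ℂ} (hν : ν.re = 0) (x : ℝ) : ‖cexp (ν * x)‖ = 1 := by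
  rw [Complex.norm_exp]; simp [hν]

lemma tendsto_osc {ν : ℂ} (hν : ν.re = 0) {h : ℝ → ℂ} {l : Filter ℝ} (hh : Tendsto h l (𝓝 0)) :
    Tendsto (fun x : ℝ => cexp (ν * x) * h x) l (𝓝 0) := by
  rw [tendsto_zero_iff_norm_tendsto_zero] at hh ⊢
  simpa [norm_cexp_im hν] using hh

lemma Fs_lim {ν w₀ : ℂ} (hν : ν.re = 0) :
    Tendsto (fun x => Fs ν w₀ x - cexp (ν * x)) atBot (𝓝 0) := by
  have r1 : 1 ≤ (1 + ν).re := by simp [hν]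
  have h1 := ((phi_deriv r1 0).continuousAt.tendsto.comp (tendsto_w w₀)).sub_const 1
  rw [phi_zero, sub_self] at h1
  refine (tendsto_osc hν h1).congr fun x => ?_
  simp [Fs]; ring

lemma Gs_lim {ν w₀ : ℂ} (hν : ν.re = 0) :
    Tendsto (fun x => Gs ν w₀ x - ν * cexp (ν * x)) atBot (𝓝 0) := by
  have r1 : 1 ≤ (1 + ν).re := by simp [hν]
  have r2 : 1 ≤ (1 + ν + 1).re := by simp [hν]
  have h1 := ((phi_deriv r1 0).continuousAt.tendsto.comp (tendsto_w w₀)).sub_const 1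
  rw [phi_zero, sub_self] at h1
  have h2 := ((phi_deriv r2 0).continuousAt.tendsto.comp (tendsto_w w₀)).div_const (1 + ν)
  have h3 := (h1.const_mul ν).add (((tendsto_w w₀).const_mul 2).mul h2)
  simp only [mul_zero, zero_mul, add_zero] at h3
  refine (tendsto_osc hν h3).congr fun x => ?_
  simp [Gs]; ring

open MeasureTheory

lemma exp_cov_deriv : ∀ x ∈ (Set.univ : Set ℝ),
    HasDerivWithinAt Real.exp (Real.exp x) Set.univ x :=
  fun x _ => (Real.hasDerivAt_exp x).hasDerivWithinAt

lemma exp_cov_image : Real.exp '' Set.univ = Set.Ioi 0 := by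
  rw [Set.image_univ, Real.range_exp]

lemma integrable_expexp {c m : ℝ} (hc : 0 < c) (hm : 0 < m) :
    Integrable fun v : ℝ => Real.exp (-c * Real.exp v + m * v) := by
  have h := integrableOn_rpow_mul_exp_neg_mul_rpow (p := 1) (s := m - 1) (b := c) (by linarith)
    one_pos hc
  rw [← exp_cov_image, integrableOn_image_iff_integrableOn_abs_deriv_smul MeasurableSet.univ
    exp_cov_deriv Real.exp_injective.injOn, integrableOn_univ] at h
  refine h.congr (Eventually.of_forall fun v => ?_)
  simp only [abs_of_pos (Real.exp_pos v), smul_eq_mul, Real.rpow_one]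
  rw [← Real.exp_mul, ← Real.exp_add, ← Real.exp_add]
  congr 1; ring

/-- The Gamma integral in logarithmic variable. -/
noncomputable def PG (a w : ℂ) : ℂ := ∫ v : ℝ, cexp (-w * cexp v + a * v)

lemma norm_PG_integrand (a w : ℂ) (v : ℝ) : ‖cexp (-w * cexp v + a * v)‖ =
    Real.exp (-w.re * Real.exp v + a.re * v) := by
  rw [Complex.norm_exp, ← Complex.ofReal_exp]
  congr 1
  simp [-Complex.ofReal_exp]

lemma PG_integrable {a w : ℂ} (ha : 0 < a.re) (hw : 0 < w.re) :
    Integrable fun v : ℝ => cexp (-w * cexp v + a * v) := by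
  refine (integrable_expexp hw ha).mono' (by fun_prop) (Eventually.of_forall fun v => ?_)
  rw [norm_PG_integrand]

lemma PG_one {a : ℂ} (ha : 0 < a.re) : PG a 1 = Complex.Gamma a := by
  rw [Complex.Gamma_eq_integral ha, Complex.GammaIntegral, ← exp_cov_image,
    integral_image_eq_integral_abs_deriv_smul MeasurableSet.univ
    exp_cov_deriv Real.exp_injective.injOn, Measure.restrict_univ, PG]
  refine integral_congr_ae (Eventually.of_forall fun v => ?_)
  simp only [abs_of_pos (Real.exp_pos v)]
  rw [Complex.real_smul, Complex.cpow_def_of_ne_zero (by exact_mod_cast (Real.exp_pos v).ne'),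
    ← Complex.ofReal_log (Real.exp_pos v).le, Real.log_exp]
  push_cast
  rw [← Complex.exp_add, ← Complex.exp_add]
  congr 1; ring

lemma PG_deriv {a w : ℂ} (ha : 0 < a.re) (hw : 0 < w.re) :
    HasDerivAt (PG a) (-PG (a + 1) w) w := by
  have key := hasDerivAt_integral_of_dominated_loc_of_deriv_le (μ := volume) (x₀ := w)
    (s := {y : ℂ | w.re / 2 < y.re})
    (F := fun (y : ℂ) (v : ℝ) => cexp (-y * cexp v + a * v))
    (F' := fun (y : ℂ) (v : ℝ) => -cexp (-y * cexp v + (a + 1) * v))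
    (bound := fun v => Real.exp (-(w.re / 2) * Real.exp v + (a.re + 1) * v))
    ((isOpen_lt continuous_const Complex.continuous_re).mem_nhds (by simp; linarith))
    (Eventually.of_forall fun y => by fun_prop) (PG_integrable ha hw) (by fun_prop)
    (Eventually.of_forall fun v y hy => by
      rw [norm_neg, norm_PG_integrand]
      simp only [Set.mem_ofPred_eq] at hy
      apply Real.exp_le_exp.mpr
      have := Real.exp_pos v
      simp
      nlinarith)
    (integrable_expexp (by linarith) (by linarith))
    (Eventually.of_forall fun v y _ => by
      have h : HasDerivAt (fun y : ℂ => -y * cexp v + a * v) (-1 * cexp v) y := by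
        simpa using (((hasDerivAt_id y).neg.mul_const (cexp v)).add_const (a * (v:ℂ)))
      convert! h.cexp using 1
      rw [show -y * cexp v + (a + 1) * v = (-y * cexp v + a * v) + v by ring, Complex.exp_add]
      ring)
  have := key.2
  rw [integral_neg] at this
  exact this

lemma PG_rec {a w : ℂ} (ha : 0 < a.re) (hw : 0 < w.re) : w * PG (a + 1) w = a * PG a w := by
  have ha1 : 0 < (a + 1).re := by simp; linarith
  have i0 := PG_integrable ha hw
  have i1 := PG_integrable ha1 hw
  have h := integral_eq_zero_of_hasDerivAt_of_integrable
    (f := fun v : ℝ => cexp (-w * cexp v + a * v))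
    (f' := fun v : ℝ => a * cexp (-w * cexp v + a * v) - w * cexp (-w * cexp v + (a + 1) * v))
    (fun v => by
      have hv := Complex.ofRealCLM.hasDerivAt (x := v)
      have h : HasDerivAt (fun v : ℝ => -w * cexp v + a * v) (-w * (cexp v * 1) + a * 1) v :=
        ((hv.cexp).const_mul (-w)).add (hv.const_mul a)
      convert! h.cexp using 1
      rw [show -w * cexp v + (a + 1) * v = (-w * cexp v + a * v) + v by ring,
        Complex.exp_add (-w * cexp v + a * v) v]
      ring)
    ((i0.const_mul a).sub (i1.const_mul w)) i0
  rw [integral_sub (i0.const_mul a) (i1.const_mul w), integral_const_mul, integral_const_mul] at h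
  exact (sub_eq_zero.mp h).symm

lemma PG_eq {a w : ℂ} (ha : 0 < a.re) (hw : 0 < w.re) : PG a w = w ^ (-a) * Complex.Gamma a := by
  have hslit : ∀ y : ℂ, 0 < y.re → y ∈ Complex.slitPlane := fun y hy => Or.inl hy
  have hd : ∀ y ∈ {y : ℂ | 0 < y.re}, HasDerivAt (fun y => y ^ a * PG a y) 0 y := by
    intro y hy
    have hy0 : y ≠ 0 := Complex.slitPlane_ne_zero (hslit y hy)
    have h1 : HasDerivAt (fun y : ℂ => y ^ a) (a * y ^ (a - 1) * 1) y :=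
      (hasDerivAt_id y).cpow_const (hslit y hy)
    convert! h1.mul (PG_deriv ha hy) using 1
    have hr := PG_rec ha hy
    rw [Complex.cpow_sub _ _ hy0, Complex.cpow_one]
    have : PG a y * a = y * PG (a + 1) y := by rw [hr]; ring
    field_simp
    linear_combination (-y ^ a) * this
  have hconv : Convex ℝ {y : ℂ | 0 < y.re} := convex_halfSpace_re_gt 0
  have hopen : IsOpen {y : ℂ | 0 < y.re} := isOpen_lt continuous_const Complex.continuous_re
  have := hopen.is_const_of_deriv_eq_zero hconv.isPreconnected
    (fun y hy => (hd y hy).differentiableAt.differentiableWithinAt)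
    (fun y hy => (hd y hy).deriv) (x := w) (y := 1) hw (by simp)
  simp only [Complex.one_cpow, one_mul, PG_one ha] at this
  have hw0 : w ≠ 0 := Complex.slitPlane_ne_zero (hslit w hw)
  rw [← this, ← mul_assoc, ← Complex.cpow_add _ _ hw0]
  simp

noncomputable def jI (z μ : ℂ) (x u : ℝ) : ℂ := cexp (-(z * cexp x * Complex.cosh u) + μ * u)

noncomputable def jK (z μ : ℂ) (x : ℝ) : ℂ := ∫ u : ℝ, jI z μ x u

lemma norm_jI (z μ : ℂ) (x u : ℝ) : ‖jI z μ x u‖ =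
    Real.exp (-(z.re * Real.exp x * Real.cosh u) + μ.re * u) := by
  rw [jI, Complex.norm_exp, ← Complex.ofReal_exp, ← Complex.ofReal_cosh]
  congr 1
  simp [-Complex.ofReal_exp, -Complex.ofReal_cosh]

lemma cosh_ge (u : ℝ) : u ^ 2 / 4 ≤ Real.cosh u := by
  rw [← Real.cosh_abs, Real.cosh_eq]
  have := Real.quadratic_le_exp_of_nonneg (abs_nonneg u)
  have h2 := Real.exp_pos (-|u|)
  have h3 := abs_nonneg u
  rw [sq_abs] at this
  linarith

lemma integrable_expcosh {c : ℝ} (hc : 0 < c) (m : ℝ) :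
    Integrable fun u : ℝ => Real.exp (-(c * Real.cosh u) + m * u) := by
  have h := (integrable_cexp_quadratic (b := ((c / 4 : ℝ) : ℂ)) (by simpa using hc) (m : ℂ) 0).norm
  refine h.mono' (by fun_prop) (Eventually.of_forall fun u => ?_)
  rw [Complex.norm_exp, Real.norm_eq_abs, abs_of_pos (Real.exp_pos _)]
  apply Real.exp_le_exp.mpr
  have : (-((c / 4 : ℝ) : ℂ) * (u:ℂ) ^ 2 + (m:ℂ) * u + 0).re = -(c / 4) * u ^ 2 + m * u := by
    norm_cast; simp
  rw [this]
  nlinarith [cosh_ge u]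

lemma jI_continuous (z μ : ℂ) (x : ℝ) : Continuous (jI z μ x) := by
  unfold jI; fun_prop

lemma jI_integrable {z : ℂ} (hz : 0 < z.re) (μ : ℂ) (x : ℝ) : Integrable (jI z μ x) := by
  refine (integrable_expcosh (c := z.re * Real.exp x) (by positivity) μ.re).mono'
    (jI_continuous z μ x).aestronglyMeasurable (Eventually.of_forall fun u => ?_)
  rw [norm_jI]

lemma jI_shift (z μ : ℂ) (x u : ℝ) : jI z (μ + 1) x u = jI z μ x u * cexp u := by
  rw [jI, jI, ← Complex.exp_add]; congr 1; ring

lemma jI_shift' (z μ : ℂ) (x u : ℝ) : jI z (μ - 1) x u = jI z μ x u * cexp (-u) := by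
  rw [jI, jI, ← Complex.exp_add]; congr 1; ring

lemma jK_deriv {z : ℂ} (hz : 0 < z.re) (μ : ℂ) (x : ℝ) :
    HasDerivAt (jK z μ) (-(z * cexp x / 2) * (jK z (μ + 1) x + jK z (μ - 1) x)) x := by
  have key := hasDerivAt_integral_of_dominated_loc_of_deriv_le (μ := volume) (x₀ := x)
    (s := Metric.ball x 1)
    (F := fun (y : ℝ) (u : ℝ) => jI z μ y u)
    (F' := fun (y : ℝ) (u : ℝ) => -(z * cexp y / 2) * (jI z (μ + 1) y u + jI z (μ - 1) y u))
    (bound := fun u => ‖z‖ * Real.exp (x + 1) / 2 *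
      (Real.exp (-(z.re * Real.exp (x - 1) * Real.cosh u) + (μ.re + 1) * u) +
        Real.exp (-(z.re * Real.exp (x - 1) * Real.cosh u) + (μ.re - 1) * u)))
    (Metric.ball_mem_nhds x one_pos)
    (Eventually.of_forall fun y => (jI_continuous z μ y).aestronglyMeasurable)
    (jI_integrable hz μ x)
    (by have := jI_continuous z (μ + 1) x
        have := jI_continuous z (μ - 1) x
        fun_prop)
    (Eventually.of_forall fun u y hy => by
      rw [Metric.mem_ball, Real.dist_eq, abs_lt] at hy
      have hc := Real.cosh_pos u
      have e1 : Real.exp y ≤ Real.exp (x + 1) := Real.exp_le_exp.mpr (by linarith)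
      have e2 : Real.exp (x - 1) ≤ Real.exp y := Real.exp_le_exp.mpr (by linarith)
      have n0 : ‖-(z * cexp y / 2)‖ = ‖z‖ * Real.exp y / 2 := by
        rw [← Complex.ofReal_exp, norm_neg, norm_div, norm_mul, Complex.norm_real,
          Real.norm_eq_abs, abs_of_pos (Real.exp_pos y)]
        simp
      rw [norm_mul, n0]
      refine mul_le_mul (by gcongr) ((norm_add_le _ _).trans ?_) (norm_nonneg _) (by positivity)
      rw [norm_jI, norm_jI]
      simp only [Complex.add_re, Complex.sub_re, Complex.one_re]
      gcongr)
    (((integrable_expcosh (by positivity) _).add (integrable_expcosh (by positivity) _)).const_mul _)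
    (Eventually.of_forall fun u y _ => by
      have hv := Complex.ofRealCLM.hasDerivAt (x := y)
      have h : HasDerivAt (fun y : ℝ => -(z * cexp y * Complex.cosh u) + μ * u)
          (-(z * (cexp y * 1) * Complex.cosh u)) y :=
        (((hv.cexp).const_mul z).mul_const (Complex.cosh u)).neg.add_const _
      convert! h.cexp using 1
      rw [jI_shift, jI_shift', Complex.cosh, jI, Complex.cosh]
      ring)
  have := key.2
  rw [integral_const_mul, integral_add (jI_integrable hz _ _) (jI_integrable hz _ _)] at this
  exact this

lemma jK_rec {z : ℂ} (hz : 0 < z.re) (μ : ℂ) (x : ℝ) :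
    μ * jK z μ x = (z * cexp x / 2) * (jK z (μ + 1) x - jK z (μ - 1) x) := by
  have i0 := jI_integrable hz μ x
  have i1 := jI_integrable hz (μ + 1) x
  have i2 := jI_integrable hz (μ - 1) x
  have i3 : Integrable (fun u => jI z (μ + 1) x u - jI z (μ - 1) x u) := i1.sub i2
  have h := integral_eq_zero_of_hasDerivAt_of_integrable
    (f := jI z μ x)
    (f' := fun u : ℝ => μ * jI z μ x u - (z * cexp x / 2) * (jI z (μ + 1) x u - jI z (μ - 1) x u))
    (fun u => by
      have hv := Complex.ofRealCLM.hasDerivAt (x := u)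
      have h : HasDerivAt (fun u : ℝ => -(z * cexp x * Complex.cosh u) + μ * u)
          (-(z * cexp x * Complex.sinh u) + μ * 1) u :=
        ((((Complex.hasDerivAt_cosh (u:ℂ)).comp_ofReal).const_mul (z * cexp x)).neg).add (hv.const_mul μ)
      convert! h.cexp using 1
      rw [jI_shift, jI_shift', Complex.sinh, jI, Complex.cosh]
      ring)
    ((i0.const_mul μ).sub (i3.const_mul _)) i0
  rw [integral_sub (i0.const_mul μ) (i3.const_mul _), integral_const_mul,
    integral_const_mul] at h
  have h2 : ∫ u, (jI z (μ + 1) x u - jI z (μ - 1) x u) = jK z (μ + 1) x - jK z (μ - 1) x :=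
    integral_sub i1 i2
  have h3 := sub_eq_zero.mp h
  rw [← h2, ← h3]; rfl

lemma jK_neg (z μ : ℂ) (x : ℝ) : jK z (-μ) x = jK z μ x := by
  unfold jK
  rw [← integral_neg_eq_self (fun u => jI z μ x u)]
  refine integral_congr_ae (Eventually.of_forall fun u => ?_)
  simp [jI]

lemma jK_decay {z : ℂ} (hz : 0 < z.re) (μ : ℂ) :
    ∃ B : ℝ, ∀ x, 0 ≤ x → ‖jK z μ x‖ ≤ Real.exp (-z.re * Real.exp x) * B := by
  refine ⟨Real.exp z.re * ∫ u, Real.exp (-(z.re * Real.cosh u) + μ.re * u), fun x hx => ?_⟩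
  rw [← mul_assoc, ← integral_const_mul]
  have hi := (integrable_expcosh hz μ.re).const_mul (Real.exp (-z.re * Real.exp x) * Real.exp z.re)
  refine norm_integral_le_of_norm_le hi (Eventually.of_forall fun u => ?_)
  rw [norm_jI, ← Real.exp_add, ← Real.exp_add]
  apply Real.exp_le_exp.mpr
  have h1 := Real.one_le_cosh u
  have h2 := Real.one_le_exp hx
  nlinarith [mul_nonneg hz.le (mul_nonneg (sub_nonneg.mpr h1) (sub_nonneg.mpr h2))]

lemma jK_tendsto {z : ℂ} (hz : 0 < z.re) (μ : ℂ) :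
    Tendsto (fun x : ℝ => cexp x * jK z μ x) atTop (𝓝 0) := by
  obtain ⟨B, hB⟩ := jK_decay hz μ
  have h1 : Tendsto (fun y : ℝ => y * Real.exp (-z.re * y)) atTop (𝓝 0) := by
    simpa using tendsto_rpow_mul_exp_neg_mul_atTop_nhds_zero 1 z.re hz
  have h2 := (h1.comp Real.tendsto_exp_atTop).mul_const B
  rw [zero_mul] at h2
  refine squeeze_zero_norm' ?_ h2
  filter_upwards [eventually_ge_atTop (0:ℝ)] with x hx
  rw [norm_mul, ← Complex.ofReal_exp, Complex.norm_real, Real.norm_eq_abs,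
    abs_of_pos (Real.exp_pos x)]
  simp only [Function.comp]
  rw [mul_assoc]
  exact mul_le_mul_of_nonneg_left (hB x hx) (Real.exp_pos x).le

lemma jK_tendsto' {z : ℂ} (hz : 0 < z.re) (μ : ℂ) :
    Tendsto (jK z μ) atTop (𝓝 0) := by
  refine squeeze_zero_norm' ?_ ((tendsto_zero_iff_norm_tendsto_zero).mp (jK_tendsto hz μ))
  filter_upwards [eventually_ge_atTop (0:ℝ)] with x hx
  rw [norm_mul, ← Complex.ofReal_exp, Complex.norm_real, Real.norm_eq_abs,
    abs_of_pos (Real.exp_pos x)]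
  exact le_mul_of_one_le_left (norm_nonneg _) (Real.one_le_exp hx)

/-- `(ζ/2) j_{ν+1}`. -/
noncomputable def Mp (z ν : ℂ) (x : ℝ) : ℂ := (z * cexp x / 2) * jK z (ν + 1) x

lemma Mp_eq (z ν : ℂ) (x : ℝ) : Mp z ν x = cexp (-ν * x) * ((z / 2) *
    ∫ v : ℝ, cexp (-(z / 2) * (cexp v + cexp (2 * x) * cexp (-v)) + (ν + 1) * v)) := by
  unfold Mp jK
  rw [← integral_add_right_eq_self (fun u => jI z (ν + 1) x u) (-x), ← integral_const_mul,
    ← integral_const_mul, ← integral_const_mul]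
  refine integral_congr_ae (Eventually.of_forall fun v => ?_)
  simp only [jI, Complex.cosh]
  push_cast
  have e : z * cexp x * ((cexp (v + -x) + cexp (-(v + -x))) / 2) =
      (z / 2) * (cexp v + cexp (2 * x) * cexp (-v)) := by
    rw [← Complex.exp_add, mul_div_assoc', mul_assoc, mul_add, ← Complex.exp_add, ← Complex.exp_add]
    ring_nf
  rw [e]
  rw [show (-(z / 2 * (cexp v + cexp (2 * x) * cexp (-v))) + (ν + 1) * (v + -x) : ℂ) =
    (-(z / 2) * (cexp v + cexp (2 * x) * cexp (-v)) + (ν + 1) * v) + (-ν * x) + (-x) by ring,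
    Complex.exp_add _ (-(x:ℂ)), Complex.exp_add _ (-ν * (x:ℂ)), Complex.exp_neg (x:ℂ)]
  have := Complex.exp_ne_zero (x:ℂ)
  field_simp

lemma Mp_lim {z ν : ℂ} (hz : 0 < z.re) (hν : ν.re = 0) :
    Tendsto (fun x : ℝ => Mp z ν x - (z / 2) ^ (-ν) * Complex.Gamma (1 + ν) * cexp (-ν * x))
      atBot (𝓝 0) := by
  have hz2 : 0 < (z / 2).re := by simpa using hz
  have hz0 : z / 2 ≠ 0 := by intro h; rw [h] at hz2; simp at hz2
  have hQ : Tendsto (fun x : ℝ => ∫ v : ℝ,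
      cexp (-(z / 2) * (cexp v + cexp (2 * x) * cexp (-v)) + (ν + 1) * v)) atBot
      (𝓝 (PG (ν + 1) (z / 2))) := by
    refine tendsto_integral_filter_of_dominated_convergence
      (fun v => Real.exp (-((z / 2).re) * Real.exp v + 1 * v))
      (Eventually.of_forall fun x => by fun_prop)
      (Eventually.of_forall fun x => Eventually.of_forall fun v => ?_)
      (integrable_expexp hz2 one_pos)
      (Eventually.of_forall fun v => ?_)
    · rw [Complex.norm_exp]
      apply Real.exp_le_exp.mpr
      have e : (cexp v + cexp (2 * x) * cexp (-v) : ℂ) =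
        ((Real.exp v + Real.exp (2 * x) * Real.exp (-v) : ℝ) : ℂ) := by push_cast; rfl
      have p : 0 < Real.exp (2 * x) * Real.exp (-v) := by positivity
      rw [e, Complex.add_re, Complex.re_mul_ofReal, Complex.re_mul_ofReal, Complex.neg_re]
      simp only [Complex.add_re, hν, Complex.one_re, zero_add]
      nlinarith
    · have h := (tendsto_w 1).mul_const (cexp (-v))
      simp only [one_mul, zero_mul] at h
      have h2 := (((h.const_add (cexp v)).const_mul (-(z / 2))).add_const ((ν + 1) * v)).cexp
      simpa using h2
  have hval : (z / 2) * PG (ν + 1) (z / 2) = (z / 2) ^ (-ν) * Complex.Gamma (1 + ν) := by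
    rw [PG_eq (by simp [hν]) hz2, ← mul_assoc, add_comm ν 1]
    congr 1
    nth_rewrite 1 [← Complex.cpow_one (z / 2)]
    rw [← Complex.cpow_add _ _ hz0]
    congr 1; ring
  have h1 := (hQ.const_mul (z / 2)).sub_const ((z / 2) * PG (ν + 1) (z / 2))
  rw [sub_self] at h1
  refine (tendsto_osc (ν := -ν) (by simp [hν]) h1).congr fun x => ?_
  rw [Mp_eq, hval]
  ring

lemma jK_eq_Mp {z : ℂ} (hz : 0 < z.re) (ν : ℂ) (x : ℝ) :
    ν * jK z ν x = Mp z ν x - Mp z (-ν) x := by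
  rw [jK_rec hz, Mp, Mp, ← jK_neg z (ν - 1)]
  ring_nf

lemma jK_deriv_Mp {z : ℂ} (hz : 0 < z.re) (ν : ℂ) (x : ℝ) :
    HasDerivAt (jK z ν) (-(Mp z ν x + Mp z (-ν) x)) x := by
  convert! jK_deriv hz ν x using 1
  rw [Mp, Mp, ← jK_neg z (ν - 1)]
  ring_nf

lemma Mp_deriv {z : ℂ} (hz : 0 < z.re) (ν : ℂ) (x : ℝ) :
    HasDerivAt (Mp z ν) (-ν * Mp z ν x - (z * cexp x) ^ 2 / 2 * jK z ν x) x := by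
  have hv := Complex.ofRealCLM.hasDerivAt (x := x)
  have h1 : HasDerivAt (fun x : ℝ => z * cexp x / 2) (z * (cexp x * 1) / 2) x :=
    ((hv.cexp).const_mul z).div_const 2
  convert! h1.mul (jK_deriv hz (ν + 1) x) using 1
  have hr := jK_rec hz (ν + 1) x
  rw [add_sub_cancel_right] at *
  unfold Mp
  linear_combination (-(z * cexp x / 2)) * hr

lemma sol_jK {t : ℝ} {ν z : ℂ} (hz : 0 < z.re) (hν2 : ν ^ 2 = -(t : ℂ) ^ 2) :
    Sol t (z ^ 2) (jK z ν) (fun x => -(Mp z ν x + Mp z (-ν) x)) := by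
  refine ⟨jK_deriv_Mp hz ν, fun x => ?_⟩
  convert! ((Mp_deriv hz ν x).add (Mp_deriv hz (-ν) x)).neg using 1
  rw [jK_neg]
  have h := jK_eq_Mp hz ν x
  have e : ((Real.exp (2 * x) : ℝ) : ℂ) = cexp x ^ 2 := by
    rw [← Complex.exp_nat_mul]; push_cast; rfl
  have : (t:ℂ)^2 = - ν ^ 2 := by rw [hν2]; ring
  rw [e, this]
  linear_combination ν * h

lemma wr_lim {t : ℝ} {α β ν : ℂ} (hν : ν = t * I) {f g : ℝ → ℂ}
    (hf : Tendsto (fun x : ℝ => f x - (α * cexp (ν * x) + β * cexp (-ν * x))) atBot (𝓝 0))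
    (hg : Tendsto (fun x : ℝ => g x - ν * (α * cexp (ν * x) - β * cexp (-ν * x))) atBot (𝓝 0)) :
    Tendsto (Wr f g) atBot (𝓝 (t * (‖α‖ ^ 2 - ‖β‖ ^ 2))) := by
  have hν0 : ν.re = 0 := by simp [hν]
  have hν1 : (-ν).re = 0 := by simp [hν]
  set f0 : ℝ → ℂ := fun x => α * cexp (ν * x) + β * cexp (-ν * x) with hf0
  set g0 : ℝ → ℂ := fun x => ν * (α * cexp (ν * x) - β * cexp (-ν * x)) with hg0
  have bf : ∀ x, ‖f0 x‖ ≤ ‖α‖ + ‖β‖ := fun x => by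
    refine (norm_add_le _ _).trans ?_
    rw [norm_mul, norm_mul, norm_cexp_im hν0, norm_cexp_im hν1]; simp
  have bg : ∀ x, ‖g0 x‖ ≤ ‖ν‖ * (‖α‖ + ‖β‖) := fun x => by
    simp only [hg0, norm_mul]
    gcongr
    refine (norm_sub_le _ _).trans ?_
    rw [norm_mul, norm_mul, norm_cexp_im hν0, norm_cexp_im hν1]; simp
  have hconst : ∀ x, Wr f0 g0 x = t * (‖α‖ ^ 2 - ‖β‖ ^ 2) := by
    intro x
    have hc : cexp (-ν * x) = (starRingEnd ℂ) (cexp (ν * x)) := by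
      rw [← Complex.exp_conj]; simp [hν]
    have hn : (cexp (ν * x)).re * (cexp (ν * x)).re + (cexp (ν * x)).im * (cexp (ν * x)).im = 1 := by
      rw [← Complex.normSq_apply, Complex.normSq_eq_norm_sq, norm_cexp_im hν0]; simp
    simp only [Wr, hf0, hg0, hc, ← Complex.normSq_eq_norm_sq, Complex.normSq_apply]
    generalize cexp (ν * x) = e at hn
    simp only [hν, Complex.mul_re, Complex.mul_im, Complex.add_re, Complex.add_im, Complex.sub_re,
      Complex.sub_im, Complex.conj_re, Complex.conj_im, Complex.I_re, Complex.I_im,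
      Complex.ofReal_re, Complex.ofReal_im]
    linear_combination (t * (α.re * α.re + α.im * α.im - (β.re * β.re + β.im * β.im))) * hn
  have h1 : Tendsto (fun x => ‖f x - f0 x‖) atBot (𝓝 0) := tendsto_zero_iff_norm_tendsto_zero.mp hf
  have h2 : Tendsto (fun x => ‖g x - g0 x‖) atBot (𝓝 0) := tendsto_zero_iff_norm_tendsto_zero.mp hg
  have hb := ((h2.mul_const (‖α‖ + ‖β‖)).add (h1.const_mul (‖ν‖ * (‖α‖ + ‖β‖)))).add (h2.mul h1)
  simp only [zero_mul, mul_zero, add_zero] at hb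
  have hd : Tendsto (fun x => Wr f g x - t * (‖α‖ ^ 2 - ‖β‖ ^ 2)) atBot (𝓝 0) := by
    refine squeeze_zero_norm (fun x => ?_) hb
    rw [← hconst x]
    have e : Wr f g x - Wr f0 g0 x = ((g x - g0 x) * (starRingEnd ℂ) (f0 x) +
      g0 x * (starRingEnd ℂ) (f x - f0 x) + (g x - g0 x) * (starRingEnd ℂ) (f x - f0 x)).im := by
      simp only [Wr, Complex.mul_re, Complex.mul_im, Complex.add_re, Complex.add_im, Complex.sub_re,
        Complex.sub_im, Complex.conj_re, Complex.conj_im]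
      ring
    rw [e, Real.norm_eq_abs]
    refine (Complex.abs_im_le_norm _).trans ((norm_add₃_le).trans ?_)
    simp only [norm_mul, RCLike.norm_conj]
    have := bf x
    have := bg x
    gcongr
  have h2 := hd.add_const (t * (‖α‖ ^ 2 - ‖β‖ ^ 2))
  rw [zero_add] at h2
  exact h2.congr fun x => by ring

lemma sign_aux {t s : ℝ} (ht : t ≠ 0) (hs : 0 < s) :
    t * (Real.exp (-(s * t)) ^ 2 - Real.exp (s * t) ^ 2) < 0 := by
  have p1 := Real.exp_pos (-(s * t))
  have p2 := Real.exp_pos (s * t)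
  rcases lt_or_gt_of_ne ht with h | h
  · have : Real.exp (s * t) < Real.exp (-(s * t)) := Real.exp_lt_exp.mpr (by nlinarith)
    exact mul_neg_of_neg_of_pos h (by nlinarith)
  · have : Real.exp (-(s * t)) < Real.exp (s * t) := Real.exp_lt_exp.mpr (by nlinarith)
    exact mul_neg_of_pos_of_neg h (by nlinarith)

lemma norm_cpow_I {z : ℂ} (hz : z ≠ 0) (t : ℝ) : ‖z ^ ((t:ℂ) * I)‖ = Real.exp (-(z.arg * t)) := by
  rw [Complex.norm_cpow_of_ne_zero hz]
  simp [Real.exp_neg]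

lemma main (t : ℝ) (ht : t ≠ 0) (z : ℂ) (hz : z ∈ Complex.slitPlane) (him : z.im ≠ 0)
    (h0 : macdonaldK ((t : ℂ) * Complex.I) z = 0) : False := by
  set ν : ℂ := (t:ℂ) * I with hν
  have hν0 : ν.re = 0 := by simp [hν]
  have hν1 : (-ν).re = 0 := by simp [hν]
  have hνne : ν ≠ 0 := by simp [hν, ht]
  have hν2 : ν ^ 2 = -(t : ℂ) ^ 2 := by rw [hν, mul_pow, Complex.I_sq]; ring
  have hν3 : (-ν) ^ 2 = -(t : ℂ) ^ 2 := by rw [neg_sq, hν2]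
  have hz0 : z ≠ 0 := Complex.slitPlane_ne_zero hz
  have hz2 : z / 2 ≠ 0 := div_ne_zero hz0 two_ne_zero
  have hG1 : Complex.Gamma (1 + ν) ≠ 0 := Complex.Gamma_ne_zero_of_re_pos (by simp [hν0])
  have hG2 : Complex.Gamma (1 - ν) ≠ 0 := Complex.Gamma_ne_zero_of_re_pos (by simp [hν0])
  set α : ℂ := -((z / 2) ^ ν * Complex.Gamma (1 - ν) / (2 * ν)) with hα
  set β : ℂ := (z / 2) ^ (-ν) * Complex.Gamma (1 + ν) / (2 * ν) with hβ
  set f : ℝ → ℂ := fun x => α * Fs ν (z ^ 2 / 4) x + β * Fs (-ν) (z ^ 2 / 4) x with hf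
  set g : ℝ → ℂ := fun x => α * Gs ν (z ^ 2 / 4) x + β * Gs (-ν) (z ^ 2 / 4) x with hg
  have hsol : Sol t (z ^ 2) f g := (sol_series hν0 hν2).lin (sol_series hν1 hν3) α β
  have hf0 : f 0 = 0 := by
    rw [← h0]
    have hr := Complex.Gamma_mul_Gamma_one_sub ν
    have hr2 : Complex.Gamma (1 + ν) = ν * Complex.Gamma ν := by
      rw [add_comm]; exact Complex.Gamma_add_one ν hνne
    have hC : ((Real.pi : ℂ) / 2) / Complex.sin (ν * (Real.pi : ℂ)) =
        Complex.Gamma (1 + ν) * Complex.Gamma (1 - ν) / (2 * ν) := by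
      have e : Complex.Gamma (1 + ν) * Complex.Gamma (1 - ν) =
          ν * ((Real.pi : ℂ) / Complex.sin ((Real.pi : ℂ) * ν)) := by
        rw [hr2, ← hr]; ring
      have e' : Complex.sin (ν * (Real.pi : ℂ)) = Complex.sin ((Real.pi : ℂ) * ν) := by
        rw [mul_comm]
      rw [e, e', mul_comm 2 ν, mul_div_mul_left _ _ hνne]
      exact div_right_comm _ _ _
    have e1 : macdonaldS (1 + ν) z = phi (1 + ν) (z ^ 2 / 4) := rfl
    have e2 : macdonaldS (1 - ν) z = phi (1 + -ν) (z ^ 2 / 4) := by rw [← sub_eq_add_neg]; rfl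
    rw [macdonaldK, hC, e1, e2]
    simp only [hf, Fs, hα, hβ]
    simp only [Complex.ofReal_zero, mul_zero, Complex.exp_zero, mul_one, one_mul]
    field_simp
    ring
  have lf : Tendsto (fun x : ℝ => f x - (α * cexp (ν * x) + β * cexp (-ν * x))) atBot (𝓝 0) := by
    have := ((Fs_lim (w₀ := z ^ 2 / 4) hν0).const_mul α).add ((Fs_lim (w₀ := z ^ 2 / 4) hν1).const_mul β)
    simp only [mul_zero, add_zero] at this
    refine this.congr fun x => ?_
    simp only [hf]; ring
  have lg : Tendsto (fun x : ℝ => g x - ν * (α * cexp (ν * x) - β * cexp (-ν * x))) atBot (𝓝 0) := by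
    have := ((Gs_lim (w₀ := z ^ 2 / 4) hν0).const_mul α).add ((Gs_lim (w₀ := z ^ 2 / 4) hν1).const_mul β)
    simp only [mul_zero, add_zero] at this
    refine this.congr fun x => ?_
    simp only [hg]; ring
  have hL := wr_lim hν lf lg
  have hLz : z.im * (t * (‖α‖ ^ 2 - ‖β‖ ^ 2)) < 0 := by
    have hGn : ‖Complex.Gamma (1 - ν)‖ = ‖Complex.Gamma (1 + ν)‖ := by
      have : 1 - ν = (starRingEnd ℂ) (1 + ν) := by simp [hν, sub_eq_add_neg]
      rw [this, Complex.Gamma_conj, RCLike.norm_conj]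
    set κ := ‖Complex.Gamma (1 + ν)‖ / ‖2 * ν‖ with hκ
    have hκ0 : 0 < κ := by
      have : 2 * ν ≠ 0 := mul_ne_zero two_ne_zero hνne
      positivity
    have ea : ‖α‖ = Real.exp (-((z / 2).arg * t)) * κ := by
      rw [hα, norm_neg, norm_div, norm_mul, hGn, hν, norm_cpow_I hz2, mul_div_assoc]
    have eb : ‖β‖ = Real.exp ((z / 2).arg * t) * κ := by
      have : -ν = ((-t : ℝ) : ℂ) * I := by rw [hν]; push_cast; ring
      rw [hβ, norm_div, norm_mul, this, norm_cpow_I hz2, mul_div_assoc]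
      congr 2; ring
    rw [ea, eb, mul_pow, mul_pow, ← sub_mul, ← mul_assoc, ← mul_assoc]
    refine mul_neg_of_neg_of_pos ?_ (by positivity)
    have him2 : (z / 2).im = z.im / 2 := by simp
    have harg : (z / 2).arg ≠ 0 := by
      intro h; rw [Complex.arg_eq_zero_iff] at h
      rw [him2] at h; exact him (by linarith [h.2])
    rcases lt_or_gt_of_ne him with h | h
    · have ha : (z / 2).arg < 0 := by rw [Complex.arg_neg_iff, him2]; linarith
      have := sign_aux ht (s := -(z / 2).arg) (by linarith)
      simp only [neg_mul, neg_neg] at this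
      rw [mul_assoc]
      exact mul_neg_of_neg_of_pos h (by nlinarith)
    · have ha : 0 < (z / 2).arg :=
        lt_of_le_of_ne (by rw [Complex.arg_nonneg_iff, him2]; linarith) harg.symm
      have := sign_aux ht ha
      rw [mul_assoc]
      exact mul_neg_of_pos_of_neg h this
  rcases le_or_gt z.re 0 with hre | hre
  · exact no_zero_left hsol hL hLz hre hf0
  -- right half plane: identify with the integral
  have hdiff := hsol.lin (sol_jK (ν := ν) hre hν2) 1 (-1 / 2)
  have m1 := Mp_lim hre hν0
  have m2 := Mp_lim hre hν1
  have hz' := hdiff.eq_zero ht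
    (by
      have := lf.add ((m1.sub m2).const_mul (-1 / (2 * ν)))
      simp only [sub_zero, mul_zero, add_zero] at this
      refine this.congr fun x => ?_
      have e : jK z ν x = (Mp z ν x - Mp z (-ν) x) / ν := by
        rw [← jK_eq_Mp hre]; field_simp
      rw [e, hα, hβ, neg_neg, ← sub_eq_add_neg]
      field_simp
      ring)
    (by
      have := lg.add ((m1.add m2).const_mul (1 / 2))
      simp only [mul_zero, add_zero] at this
      refine this.congr fun x => ?_
      rw [hα, hβ, neg_neg, ← sub_eq_add_neg]
      field_simp
      ring)
  have tf : Tendsto f atTop (𝓝 0) := by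
    have := (jK_tendsto' hre ν).const_mul (1 / 2)
    rw [mul_zero] at this
    refine this.congr fun x => ?_
    linear_combination -(hz' x).1
  have tM : ∀ μ, Tendsto (Mp z μ) atTop (𝓝 0) := fun μ => by
    have := (jK_tendsto hre (μ + 1)).const_mul (z / 2)
    rw [mul_zero] at this
    refine this.congr fun x => ?_
    rw [Mp]; ring
  have tg : Tendsto g atTop (𝓝 0) := by
    have := ((tM ν).add (tM (-ν))).const_mul (-1 / 2)
    simp only [add_zero, mul_zero] at this
    refine this.congr fun x => ?_
    linear_combination -(hz' x).2
  have hT : Tendsto (Wr f g) atTop (𝓝 0) := by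
    have a1 := (Complex.continuous_re.tendsto _).comp tf
    have a2 := (Complex.continuous_im.tendsto _).comp tf
    have a3 := (Complex.continuous_re.tendsto _).comp tg
    have a4 := (Complex.continuous_im.tendsto _).comp tg
    have := (a4.mul a1).sub (a3.mul a2)
    simp only [Complex.zero_re, Complex.zero_im, mul_zero, sub_zero] at this
    exact this
  exact no_zero_right ht hsol hL hLz hre hT hf0

end MacK

/-- For purely imaginary order, every zero of the Macdonald function in the principal
Riemann sheet lies on the positive real semiaxis. -/
theorem macdonaldK_imaginary_order_zeros_real (t : ℝ) (ht : t ≠ 0) (z : ℂ)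
    (hz : z ∈ Complex.slitPlane) (h0 : macdonaldK ((t : ℂ) * Complex.I) z = 0) :
    ∃ x : ℝ, 0 < x ∧ z = (x : ℂ) := by
  by_cases him : z.im = 0
  · refine ⟨z.re, ?_, Complex.ext (by simp) (by simp [him])⟩
    rcases hz with h | h
    · exact h
    · exact absurd him h
  · exact (MacK.main t ht z hz him h0).elim
end
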